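/- Assume the standing assumptions (B), fix α ∈ C(Ω̄;𝕊ⁿ(θ₀)), T(ε) ∈ (0,∞], C₀ > 0 and m ∈ (0, M_α). Suppose a^ε ∈ C(Q̄_{T(ε)};𝕊ⁿ(θ₀)) satisfies a^ε(x,t) ≤ α(x) (in the order of symmetric matrices) in Q_{T(ε)}, and u^ε ∈ C(Q̄_{T(ε)}) ∩ C^{2,1}(Q_{T(ε)}) is a classical subsolution of (L) in Q_{T(ε)} (i.e. u^ε_t ≤ ε tr[a^ε(x,t)D²u^ε] + b(x)·Du^ε) with u^ε(·,0) ≤ 0 on Σ_α^m and u^ε ≤ C₀ in Q_{T(ε)}. Then for any δ > 0 there exists ε₀ ∈ (0,1) such that for all ε ∈ (0,ε₀): u^ε(0,t) ≤ δ for all t ∈ [0, min(exp((m−δ)/ε), T(ε))). -/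

import Mathlib

open Set Filter Metric Topology
open scoped ENNReal

noncomputable section

/-- `n`-dimensional Euclidean space. -/
abbrev Eu (n : ℕ) := EuclideanSpace ℝ (Fin n)

variable {n : ℕ}

/-- Euclidean dot product. -/
def dotp (x y : Eu n) : ℝ := ∑ i, x i * y i

/-- The quadratic form `A p · p` of a matrix `A`. -/
def mquad (A : Matrix (Fin n) (Fin n) ℝ) (p : Eu n) : ℝ := ∑ i, ∑ j, A i j * p i * p j

/-- `A ∈ 𝕊ⁿ(θ)`: symmetric with `θ I ≤ A ≤ θ⁻¹ I`. -/
def memS (θ : ℝ) (A : Matrix (Fin n) (Fin n) ℝ) : Prop :=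
  A.IsSymm ∧ ∀ p : Eu n, θ * ‖p‖ ^ 2 ≤ mquad A p ∧ mquad A p ≤ θ⁻¹ * ‖p‖ ^ 2

/-- order of symmetric matrices (via quadratic forms). -/
def mle (A B : Matrix (Fin n) (Fin n) ℝ) : Prop := ∀ p : Eu n, mquad A p ≤ mquad B p

/-- trace of the product `A·H`. -/
def trMul (A H : Matrix (Fin n) (Fin n) ℝ) : ℝ := ∑ i, ∑ j, A i j * H j i

/-- the Pucci maximal operator associated with `𝕊ⁿ(θ)`. -/
def pucci (θ : ℝ) (X : Matrix (Fin n) (Fin n) ℝ) : ℝ :=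
  sSup ((fun A => trMul A X) '' {A | memS θ A})

/-- time derivative of `u(x,t)`. -/
def tD (u : Eu n → ℝ → ℝ) (x : Eu n) (t : ℝ) : ℝ := deriv (u x) t

/-- spatial gradient of `u(x,t)`. -/
def sG (u : Eu n → ℝ → ℝ) (x : Eu n) (t : ℝ) : Eu n := gradient (fun y => u y t) x

/-- spatial Hessian matrix of `u(x,t)`. -/
def sH (u : Eu n → ℝ → ℝ) (x : Eu n) (t : ℝ) : Matrix (Fin n) (Fin n) ℝ :=
  fun i j => fderiv ℝ (fun y => sG u y t i) x (EuclideanSpace.single j 1)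

/-- Hessian matrix of a static function. -/
def hessS (v : Eu n → ℝ) (x : Eu n) : Matrix (Fin n) (Fin n) ℝ :=
  fun i j => fderiv ℝ (fun y => gradient v y i) x (EuclideanSpace.single j 1)

/-- closed parabolic cylinder `Q̄_T = closure Ω × [0,T]` (with `T ∈ (0,∞]`). -/
def cylC (Ω : Set (Eu n)) (T : ℝ≥0∞) : Set (Eu n × ℝ) :=
  {p | p.1 ∈ closure Ω ∧ 0 ≤ p.2 ∧ ENNReal.ofReal p.2 ≤ T}

/-- open parabolic cylinder `Q_T = Ω × (0,T)`. -/
def cylO (Ω : Set (Eu n)) (T : ℝ≥0∞) : Set (Eu n × ℝ) :=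
  {p | p.1 ∈ Ω ∧ 0 < p.2 ∧ ENNReal.ofReal p.2 < T}

/-- `u ∈ C^{2,1}(Q_T)`. -/
def C21 (u : Eu n → ℝ → ℝ) (Ω : Set (Eu n)) (T : ℝ≥0∞) : Prop :=
  (∀ x ∈ Ω, ∀ t : ℝ, 0 < t → ENNReal.ofReal t < T →
     ContDiffAt ℝ 2 (fun y => u y t) x ∧ DifferentiableAt ℝ (u x) t) ∧
  ContinuousOn (fun p : Eu n × ℝ => tD u p.1 p.2) (cylO Ω T) ∧
  ContinuousOn (fun p : Eu n × ℝ => sH u p.1 p.2) (cylO Ω T)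

/-- `u ∈ C(Q̄_T) ∩ C^{2,1}(Q_T)`. -/
def Classical21 (u : Eu n → ℝ → ℝ) (Ω : Set (Eu n)) (T : ℝ≥0∞) : Prop :=
  ContinuousOn (fun p : Eu n × ℝ => u p.1 p.2) (cylC Ω T) ∧ C21 u Ω T

/-- a coefficient field in `C(Q̄_T; 𝕊ⁿ(θ))`. -/
def MatC (θ : ℝ) (A : Eu n → ℝ → Matrix (Fin n) (Fin n) ℝ) (Ω : Set (Eu n))
    (T : ℝ≥0∞) : Prop :=
  ContinuousOn (fun p : Eu n × ℝ => A p.1 p.2) (cylC Ω T) ∧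
  ∀ p ∈ cylC Ω T, memS θ (A p.1 p.2)

/-- `u` is a classical solution of `u_t = ε tr[A D²u] + b·Du` in `Q_T`. -/
def SolveL (ε : ℝ) (A : Eu n → ℝ → Matrix (Fin n) (Fin n) ℝ) (b : Eu n → Eu n)
    (u : Eu n → ℝ → ℝ) (Ω : Set (Eu n)) (T : ℝ≥0∞) : Prop :=
  ∀ x ∈ Ω, ∀ t : ℝ, 0 < t → ENNReal.ofReal t < T →
    tD u x t = ε * trMul (A x t) (sH u x t) + dotp (b x) (sG u x t)

/-- `u` is a classical subsolution of `(L)` in `Q_T`. -/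
def SubsolL (ε : ℝ) (A : Eu n → ℝ → Matrix (Fin n) (Fin n) ℝ) (b : Eu n → Eu n)
    (u : Eu n → ℝ → ℝ) (Ω : Set (Eu n)) (T : ℝ≥0∞) : Prop :=
  ∀ x ∈ Ω, ∀ t : ℝ, 0 < t → ENNReal.ofReal t < T →
    tD u x t ≤ ε * trMul (A x t) (sH u x t) + dotp (b x) (sG u x t)

/-- `u` is a classical supersolution of `(L)` in `Q_T`. -/
def SupersolL (ε : ℝ) (A : Eu n → ℝ → Matrix (Fin n) (Fin n) ℝ) (b : Eu n → Eu n)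
    (u : Eu n → ℝ → ℝ) (Ω : Set (Eu n)) (T : ℝ≥0∞) : Prop :=
  ∀ x ∈ Ω, ∀ t : ℝ, 0 < t → ENNReal.ofReal t < T →
    ε * trMul (A x t) (sH u x t) + dotp (b x) (sG u x t) ≤ tD u x t

/-- viscosity subsolution of `H(x,Du) = 0` on `A`. -/
def ViscSub (H : Eu n → Eu n → ℝ) (A : Set (Eu n)) (u : Eu n → ℝ) : Prop :=
  ∀ φ : Eu n → ℝ, ContDiff ℝ 1 φ → ∀ x ∈ A,
    IsLocalMaxOn (fun y => u y - φ y) A x → H x (gradient φ x) ≤ 0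

/-- viscosity supersolution of `H(x,Du) = 0` on `A`. -/
def ViscSup (H : Eu n → Eu n → ℝ) (A : Set (Eu n)) (u : Eu n → ℝ) : Prop :=
  ∀ φ : Eu n → ℝ, ContDiff ℝ 1 φ → ∀ x ∈ A,
    IsLocalMinOn (fun y => u y - φ y) A x → 0 ≤ H x (gradient φ x)

/-- the Hamiltonian `H_α(x,p) = α(x) p·p + b(x)·p`. -/
def Ham (α : Eu n → Matrix (Fin n) (Fin n) ℝ) (b : Eu n → Eu n) (x p : Eu n) : ℝ :=
  mquad (α x) p + dotp (b x) p

/-- the quasi-potential `V_α`: the pointwise supremum (= maximal element) of all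
Lipschitz viscosity subsolutions of `H_α(x,Du)=0` in `Ω` vanishing at the origin. -/
def Vq (α : Eu n → Matrix (Fin n) (Fin n) ℝ) (b : Eu n → Eu n) (Ω : Set (Eu n))
    (x : Eu n) : ℝ :=
  sSup {r | ∃ u : Eu n → ℝ, (∃ K : NNReal, LipschitzOnWith K u (closure Ω)) ∧
    u 0 = 0 ∧ ViscSub (Ham α b) Ω u ∧ r = u x}

/-- `M_α = min_{∂Ω} V_α`. -/
def Mq (α : Eu n → Matrix (Fin n) (Fin n) ℝ) (b : Eu n → Eu n) (Ω : Set (Eu n)) : ℝ :=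
  sInf (Vq α b Ω '' frontier Ω)

/-- `argmin (V_α | ∂Ω)`. -/
def argminV (α : Eu n → Matrix (Fin n) (Fin n) ℝ) (b : Eu n → Eu n)
    (Ω : Set (Eu n)) : Set (Eu n) :=
  {x ∈ frontier Ω | ∀ y ∈ frontier Ω, Vq α b Ω x ≤ Vq α b Ω y}

/-- `Σ_α^m = {x ∈ Ω̄ : V_α(x) ≤ m}`. -/
def SigmaM (α : Eu n → Matrix (Fin n) (Fin n) ℝ) (b : Eu n → Eu n) (Ω : Set (Eu n))
    (m : ℝ) : Set (Eu n) :=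
  {x ∈ closure Ω | Vq α b Ω x ≤ m}

/-- `Ω` is a bounded `C¹` domain with outward unit normal `ν`. -/
def IsBdC1With (Ω : Set (Eu n)) (ν : Eu n → Eu n) : Prop :=
  IsOpen Ω ∧ Bornology.IsBounded Ω ∧
  ∃ ρ : Eu n → ℝ, ContDiff ℝ 1 ρ ∧ Ω = {x | ρ x < 0} ∧
    ∀ x ∈ frontier Ω, gradient ρ x ≠ 0 ∧ ν x = ‖gradient ρ x‖⁻¹ • gradient ρ x

/-- `X` is the flow of `b`, and the origin is globally asymptotically stable. -/
def GAS (b : Eu n → Eu n) (X : ℝ → Eu n → Eu n) : Prop :=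
  (∀ x, X 0 x = x) ∧ (∀ x t, HasDerivAt (fun s => X s x) (b (X t x)) t) ∧
  (∀ x, Tendsto (fun t => X t x) atTop (nhds 0)) ∧
  (∀ ε > (0:ℝ), ∃ δ > (0:ℝ), ∀ x : Eu n, ‖x‖ < δ → ∀ t ≥ (0:ℝ), ‖X t x‖ < ε)

/-- `Ω_δ = {x ∈ Ω : dist(x,∂Ω) > δ}`. -/
def Omd (Ω : Set (Eu n)) (δ : ℝ) : Set (Eu n) := {x ∈ Ω | δ < infDist x (frontier Ω)}

/-- `Ω^Π_δ = {x ∈ Ω̄ : dist(x, ∂Ω \ Π) > δ}`. -/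
def OmPid (Ω Pset : Set (Eu n)) (δ : ℝ) : Set (Eu n) :=
  {x ∈ closure Ω | δ < infDist x (frontier Ω \ Pset)}

/-- the standing assumptions (B). -/
structure SettingB (n : ℕ) where
  Ω : Set (Eu n)
  ν : Eu n → Eu n
  g : Eu n → ℝ
  θ₀ : ℝ
  a : Eu n → ℝ → Matrix (Fin n) (Fin n) ℝ
  b : Eu n → Eu n
  b₀ : ℝ
  r₀ : ℝ
  θ₀_mem : θ₀ ∈ Set.Ioc (0 : ℝ) 1
  domain : IsBdC1With Ω ν
  zero_mem : (0 : Eu n) ∈ Ω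
  g_cont : ContinuousOn g (closure Ω)
  a_cont : ContinuousOn (fun p : Eu n × ℝ => a p.1 p.2) (closure Ω ×ˢ Set.univ)
  a_mem : ∀ x ∈ closure Ω, ∀ c : ℝ, memS θ₀ (a x c)
  b_lip : ∃ K : NNReal, LipschitzWith K b
  b_zero : b 0 = 0
  b_gas : ∃ X : ℝ → Eu n → Eu n, GAS b X
  b_inward : ∀ x ∈ frontier Ω, dotp (b x) (ν x) < 0
  b₀_pos : 0 < b₀
  r₀_pos : 0 < r₀
  ball_sub : closedBall (0 : Eu n) r₀ ⊆ Ω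
  b_coerc : ∀ x ∈ ball (0 : Eu n) r₀, dotp (b x) x ≤ -b₀ * ‖x‖ ^ 2

namespace SettingB

variable (S : SettingB n)

/-- the quasi-potential `V^c` associated with `(a(·,c), b)`. -/
def Vc (c : ℝ) : Eu n → ℝ := Vq (fun x => S.a x c) S.b S.Ω

/-- `M(c) = min_{∂Ω} V^c`. -/
def M (c : ℝ) : ℝ := sInf (S.Vc c '' frontier S.Ω)

/-- `G(c) = {g(x) : x ∈ argmin(V^c|∂Ω)}`. -/
def Gset (c : ℝ) : Set ℝ := S.g '' argminV (fun x => S.a x c) S.b S.Ω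

/-- `G⁺(c) = max G(c)`. -/
def Gp (c : ℝ) : ℝ := sSup (S.Gset c)

/-- `G⁻(c) = min G(c)`. -/
def Gm (c : ℝ) : ℝ := sInf (S.Gset c)

/-- `c₀ = g(0)`. -/
def c0 : ℝ := S.g 0

/-- `g_min = min_{Ω̄} g`. -/
def gmin : ℝ := sInf (S.g '' closure S.Ω)

/-- `g_max = max_{Ω̄} g`. -/
def gmax : ℝ := sSup (S.g '' closure S.Ω)

/-- the crossing value `c₁`. -/
def c1 : ℝ :=
  if S.c0 ≤ S.Gp S.c0 then sInf {c | S.c0 ≤ c ∧ S.Gm c ≤ c}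
  else sSup {c | c ≤ S.c0 ∧ c ≤ S.Gp c}

/-- the function `c̄ : (0,∞) → I_g`. -/
def cbar (l : ℝ) : ℝ :=
  if l < S.M S.c0 ∨ S.c1 = S.c0 then S.c0
  else if S.c0 < S.c1 then min S.c1 (sInf {c | c ∈ Set.Icc S.c0 S.c1 ∧ S.M c = l})
  else max S.c1 (sSup {c | c ∈ Set.Icc S.c1 S.c0 ∧ S.M c = l})

/-- assumption (FK13): `G⁺(c₀) = G⁻(c₀)`. -/
def FK13 : Prop := S.Gp S.c0 = S.Gm S.c0

/-- assumption (FK12). -/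
def FK12 : Prop :=
  ∀ δ₀ > (0:ℝ), ∃ δ ∈ Set.Ioc (0:ℝ) δ₀,
    (S.c1 ≤ S.c0 ∧ S.gmin < S.c1 → S.c1 - δ < S.Gm (S.c1 - δ)) ∧
    (S.c0 ≤ S.c1 ∧ S.c1 < S.gmax → S.Gp (S.c1 + δ) < S.c1 + δ)

/-- `u` is a classical (`C(Q̄) ∩ C^{2,1}(Q)`) solution of the quasi-linear equation (QL). -/
def SolvesQL (ε : ℝ) (u : Eu n → ℝ → ℝ) : Prop :=
  Classical21 u S.Ω ⊤ ∧ SolveL ε (fun x t => S.a x (u x t)) S.b u S.Ω ⊤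

/-- the boundary condition (BC): `u = g` on the parabolic boundary of `Q`. -/
def BC (u : Eu n → ℝ → ℝ) : Prop :=
  (∀ x ∈ closure S.Ω, u x 0 = S.g x) ∧ ∀ x ∈ frontier S.Ω, ∀ t > (0:ℝ), u x t = S.g x

end SettingB

/-!
The function `V_α` is a supremum of Lipschitz subsolutions of `H_α(x, Du) = 0`, so by compactness
the maximum of finitely many of them is close to `V_α` wherever `V_α > m`. Mixing in a small
multiple of a Lyapunov function, the integral of a nonnegative function along the flow of `b`,
makes the inequality strict away from the origin, and since `H_α(x, ·)` is convex, mollification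
preserves it. For the resulting smooth function `W` and `k` slightly below `m`, the function
`C₀ exp((W - k) / ε) + κ t` is a supersolution on `{W ≤ k}` as soon as `κ` exceeds a constant times
`ε⁻¹ exp((2d - k) / ε)`, where `2d` is a small bound for `W` on the region in which strictness
fails. Comparison at the origin then gives a bound tending to `0` with `ε` up to time
`exp((m - δ) / ε)`.
-/

/-! ### Quadratic forms and traces -/

section QuadraticForms

variable {A B H : Matrix (Fin n) (Fin n) ℝ} {θ : ℝ}

lemma dotp_eq_inner (x y : Eu n) : dotp x y = inner ℝ x y := by
  simp [dotp, PiLp.inner_apply, mul_comm]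

lemma dotp_gradient (v : Eu n) (f : Eu n → ℝ) (x : Eu n) :
    dotp v (gradient f x) = fderiv ℝ f x v := by
  rw [dotp_eq_inner, inner_gradient_right, conj_trivial]

lemma mquad_eq_dotProduct (A : Matrix (Fin n) (Fin n) ℝ) (p : Eu n) :
    mquad A p = p.ofLp ⬝ᵥ A.mulVec p.ofLp := by
  simp only [mquad, dotProduct, Matrix.mulVec, Finset.mul_sum]
  exact Finset.sum_congr rfl fun i _ => Finset.sum_congr rfl fun j _ => by ring

lemma trMul_eq_trace (A H : Matrix (Fin n) (Fin n) ℝ) : trMul A H = (A * H).trace := rfl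

lemma memS.posSemidef (hA : memS θ A) (hθ : 0 ≤ θ) : A.PosSemidef := by
  refine .of_dotProduct_mulVec_nonneg (Matrix.isHermitian_iff_isSymm.2 hA.1) fun p => ?_
  rw [star_trivial, ← mquad_eq_dotProduct A (WithLp.toLp 2 p)]
  exact le_trans (by positivity) (hA.2 _).1

lemma exists_eq_conjTranspose_mul_self (hA : A.PosSemidef) :
    ∃ B : Matrix (Fin n) (Fin n) ℝ, A = B.conjTranspose * B := by
  open scoped MatrixOrder in
  exact CStarAlgebra.nonneg_iff_eq_star_mul_self.mp hA.nonneg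

lemma mquad_conjTranspose_mul_self (B : Matrix (Fin n) (Fin n) ℝ) (p : Eu n) :
    mquad (B.conjTranspose * B) p = ‖B.toEuclideanLin p‖ ^ 2 := by
  rw [mquad_eq_dotProduct, ← Matrix.mulVec_mulVec, Matrix.conjTranspose_eq_transpose_of_trivial,
    Matrix.dotProduct_transpose_mulVec, ← real_inner_self_eq_norm_sq, ← dotp_eq_inner]
  rfl

lemma convexOn_mquad (hA : A.PosSemidef) : ConvexOn ℝ univ (mquad A) := by
  obtain ⟨B, rfl⟩ := exists_eq_conjTranspose_mul_self hA
  simp only [funext (mquad_conjTranspose_mul_self B)]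
  exact (convexOn_univ_norm.comp_linearMap B.toEuclideanLin).pow (fun _ _ => norm_nonneg _) 2

lemma mquad_smul (A : Matrix (Fin n) (Fin n) ℝ) (c : ℝ) (p : Eu n) :
    mquad A (c • p) = c ^ 2 * mquad A p := by
  simp only [mquad_eq_dotProduct, WithLp.ofLp_smul, Matrix.mulVec_smul, dotProduct_smul,
    smul_dotProduct, smul_eq_mul]
  ring

lemma trMul_conjTranspose_mul_self (B H : Matrix (Fin n) (Fin n) ℝ) :
    trMul (B.conjTranspose * B) H = ∑ k, mquad H (WithLp.toLp 2 (B k)) := by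
  rw [trMul_eq_trace, Matrix.mul_assoc, Matrix.trace_mul_comm, Matrix.mul_assoc]
  refine Finset.sum_congr rfl fun k _ => ?_
  rw [mquad_eq_dotProduct]
  rfl

lemma trMul_le_trMul (hA : A.PosSemidef) (hBH : mle B H) : trMul A B ≤ trMul A H := by
  obtain ⟨C, rfl⟩ := exists_eq_conjTranspose_mul_self hA
  simp only [trMul_conjTranspose_mul_self]
  exact Finset.sum_le_sum fun k _ => hBH _

lemma trMul_smul_one_add_vecMulVec (A : Matrix (Fin n) (Fin n) ℝ) (c d : ℝ) (p : Eu n) :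
    trMul A (c • 1 + d • Matrix.vecMulVec p p) = c * A.trace + d * mquad A p := by
  rw [trMul_eq_trace, mul_add, Matrix.trace_add, Matrix.mul_smul, Matrix.mul_smul,
    Matrix.trace_smul, Matrix.trace_smul, mul_one, Matrix.mul_vecMulVec, Matrix.trace_vecMulVec,
    dotProduct_comm, ← mquad_eq_dotProduct, smul_eq_mul, smul_eq_mul]

lemma mquad_smul_one_add_vecMulVec (c d : ℝ) (p q : Eu n) :
    mquad (c • 1 + d • Matrix.vecMulVec p p) q = c * ‖q‖ ^ 2 + d * dotp q p ^ 2 := by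
  have hq : q.ofLp ⬝ᵥ q.ofLp = ‖q‖ ^ 2 := by
    rw [← real_inner_self_eq_norm_sq, ← dotp_eq_inner]
    rfl
  have hqp : q.ofLp ⬝ᵥ p.ofLp = dotp q p := rfl
  rw [mquad_eq_dotProduct, Matrix.add_mulVec, dotProduct_add, Matrix.smul_mulVec,
    Matrix.smul_mulVec, dotProduct_smul, dotProduct_smul, Matrix.one_mulVec,
    Matrix.vecMulVec_mulVec, dotProduct_smul, dotProduct_comm p.ofLp, hq, hqp]
  simp only [smul_eq_mul, MulOpposite.smul_eq_mul_unop, MulOpposite.unop_op]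
  ring

lemma trace_le_of_mquad_le {c : ℝ} (hA : ∀ p : Eu n, mquad A p ≤ c * ‖p‖ ^ 2) :
    A.trace ≤ n * c := by
  calc A.trace ≤ ∑ _i : Fin n, c := Finset.sum_le_sum fun i _ => by
        simpa [mquad, Pi.single_apply] using hA (EuclideanSpace.single i 1)
    _ = n * c := by simp

end QuadraticForms

/-! ### Second-order calculus -/

section Calculus

variable {E : Type*} [NormedAddCommGroup E] [NormedSpace ℝ E]

lemma deriv_deriv_nonpos_of_isLocalMax {g : ℝ → ℝ} {a : ℝ} (hg : ContinuousAt g a)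
    (ha : IsLocalMax g a) : deriv (deriv g) a ≤ 0 := by
  by_contra! hpos
  have hmin : IsLocalMin g a := isLocalMin_of_deriv_deriv_pos hpos ha.deriv_eq_zero hg
  have hconst : g =ᶠ[𝓝 a] fun _ => g a := by
    filter_upwards [ha, hmin] with s hle hge using le_antisymm hle hge
  have hzero : deriv (deriv g) a = 0 := by
    rw [hconst.deriv.deriv_eq]
    simp
  exact hpos.ne' hzero

lemma fderiv_fderiv_apply_nonpos_of_isLocalMax {f : E → ℝ} {x : E} (hf : ContDiffAt ℝ 2 f x)
    (hx : IsLocalMax f x) (v : E) : fderiv ℝ (fderiv ℝ f) x v v ≤ 0 := by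
  have hline (s : ℝ) : HasDerivAt (fun r : ℝ => x + r • v) v s := by
    simpa using ((hasDerivAt_id s).smul_const v).const_add x
  have hline0 : x + (0 : ℝ) • v = x := by simp
  have htendsto : Tendsto (fun r : ℝ => x + r • v) (𝓝 0) (𝓝 x) := by
    simpa using (hline 0).continuousAt.tendsto
  have hfderiv : DifferentiableAt ℝ (fderiv ℝ f) x :=
    (hf.fderiv_right (m := 1) (by norm_num)).differentiableAt one_ne_zero
  have hderiv : deriv (fun s : ℝ => f (x + s • v)) =ᶠ[𝓝 0] fun s => fderiv ℝ f (x + s • v) v := by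
    filter_upwards [htendsto.eventually (hf.eventually (by simp))] with s hs
    exact ((hs.differentiableAt two_ne_zero).hasFDerivAt.comp_hasDerivAt s (hline s)).deriv
  have hderiv2 : deriv (deriv fun s : ℝ => f (x + s • v)) 0 = fderiv ℝ (fderiv ℝ f) x v v := by
    rw [hderiv.deriv_eq]
    have hcomp := (hline0.symm ▸ hfderiv.hasFDerivAt).comp_hasDerivAt (0 : ℝ) (hline 0)
    simpa using (hcomp.clm_apply (hasDerivAt_const (0 : ℝ) v)).deriv
  rw [← hderiv2]
  refine deriv_deriv_nonpos_of_isLocalMax ?_ ?_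
  · exact ContinuousAt.comp (by simpa using hf.continuousAt) (hline 0).continuousAt
  · simpa [IsLocalMax, IsMaxFilter] using htendsto.eventually hx

lemma fderiv_fderiv_le_of_isLocalMax_sub {f g : E → ℝ} {x : E} (hf : ContDiffAt ℝ 2 f x)
    (hg : ContDiffAt ℝ 2 g x) (hx : IsLocalMax (fun y => f y - g y) x) (v : E) :
    fderiv ℝ (fderiv ℝ f) x v v ≤ fderiv ℝ (fderiv ℝ g) x v v := by
  have hsub : (fderiv ℝ fun y => f y - g y) =ᶠ[𝓝 x] fderiv ℝ f - fderiv ℝ g := by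
    filter_upwards [hf.eventually (by simp), hg.eventually (by simp)] with y hfy hgy
    exact fderiv_fun_sub (hfy.differentiableAt two_ne_zero) (hgy.differentiableAt two_ne_zero)
  have hsub2 : fderiv ℝ (fderiv ℝ fun y => f y - g y) x
      = fderiv ℝ (fderiv ℝ f) x - fderiv ℝ (fderiv ℝ g) x := by
    rw [hsub.fderiv_eq]
    exact fderiv_sub ((hf.fderiv_right (m := 1) (by norm_num)).differentiableAt one_ne_zero)
      ((hg.fderiv_right (m := 1) (by norm_num)).differentiableAt one_ne_zero)
  have hle := fderiv_fderiv_apply_nonpos_of_isLocalMax (hf.sub hg) hx v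
  rw [hsub2] at hle
  exact sub_nonpos.1 hle

lemma le_deriv_of_forall_Icc_sub_le {g : ℝ → ℝ} {t κ : ℝ} (ht : 0 < t)
    (hg : DifferentiableAt ℝ g t) (hmax : ∀ s ∈ Icc 0 t, g s - κ * s ≤ g t - κ * t) :
    κ ≤ deriv g t := by
  have hslope : Tendsto (slope g t) (𝓝[<] t) (𝓝 (deriv g t)) :=
    (hasDerivAt_iff_tendsto_slope.1 hg.hasDerivAt).mono_left
      (nhdsWithin_mono _ fun s hs => ne_of_lt hs)
  refine ge_of_tendsto hslope ?_
  filter_upwards [Ioo_mem_nhdsLT ht] with s hs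
  rw [slope_def_field, le_div_iff_of_neg (by linarith [hs.2])]
  linarith [hmax s ⟨hs.1.le, hs.2.le⟩]

lemma hasFDerivAt_const_mul_exp {f : E → ℝ} {f' : E →L[ℝ] ℝ} {x : E} (hf : HasFDerivAt f f' x)
    (C m ε : ℝ) :
    HasFDerivAt (fun y => C * Real.exp ((f y - m) / ε))
      ((C * Real.exp ((f x - m) / ε) / ε) • f') x := by
  have hexp := ((hf.sub_const m).mul_const ε⁻¹).exp.const_mul C
  simp only [← div_eq_mul_inv] at hexp
  refine hexp.congr_fderiv ?_
  ext v
  simp only [smul_apply, smul_eq_mul]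
  ring

lemma fderiv_fderiv_const_mul_exp {f : E → ℝ} (hf : ContDiff ℝ 2 f) (C m ε : ℝ) (x v : E) :
    fderiv ℝ (fderiv ℝ fun y => C * Real.exp ((f y - m) / ε)) x v v
      = C * Real.exp ((f x - m) / ε) / ε *
        (fderiv ℝ (fderiv ℝ f) x v v + ε⁻¹ * fderiv ℝ f x v ^ 2) := by
  have hf1 (y : E) : HasFDerivAt f (fderiv ℝ f y) y :=
    (hf.differentiable two_ne_zero y).hasFDerivAt
  have hf2 : HasFDerivAt (fderiv ℝ f) (fderiv ℝ (fderiv ℝ f) x) x :=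
    ((hf.fderiv_right (m := 1) (by norm_num)).differentiable one_ne_zero x).hasFDerivAt
  have hfirst := funext fun y => (hasFDerivAt_const_mul_exp (hf1 y) C m ε).fderiv
  have hcoef := (hasFDerivAt_const_mul_exp (hf1 x) C m ε).mul_const ε⁻¹
  simp only [← div_eq_mul_inv] at hcoef
  rw [hfirst, (HasFDerivAt.fun_smul hcoef hf2).fderiv]
  simp only [add_apply, smul_apply, ContinuousLinearMap.smulRight_apply, smul_eq_mul]
  ring

end Calculus

lemma hessS_apply {f : Eu n → ℝ} {x : Eu n} (hf : ContDiffAt ℝ 2 f x) (i j : Fin n) :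
    hessS f x i j = fderiv ℝ (fderiv ℝ f) x (EuclideanSpace.single j 1)
      (EuclideanSpace.single i 1) := by
  have hf2 : DifferentiableAt ℝ (fderiv ℝ f) x :=
    (hf.fderiv_right (m := 1) (by norm_num)).differentiableAt one_ne_zero
  have hcoord : (fun y => gradient f y i) = fun y => fderiv ℝ f y (EuclideanSpace.single i 1) := by
    funext y
    simp [← dotp_gradient, dotp]
  rw [hessS, hcoord, (hf2.hasFDerivAt.clm_apply (hasFDerivAt_const _ x)).fderiv]
  simp

lemma mquad_hessS {f : Eu n → ℝ} {x : Eu n} (hf : ContDiffAt ℝ 2 f x) (v : Eu n) :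
    mquad (hessS f x) v = fderiv ℝ (fderiv ℝ f) x v v := by
  have hv : v = ∑ i, v i • EuclideanSpace.single i (1 : ℝ) := by
    ext j
    simp [Finset.sum_apply, Pi.single_apply]
  conv_rhs => rw [hv]
  simp only [mquad, hessS_apply hf, map_sum, map_smul, sum_apply, smul_apply, smul_eq_mul,
    Finset.mul_sum]
  exact Finset.sum_congr rfl fun i _ => Finset.sum_congr rfl fun j _ => by ring

/-! ### Mollification of Lipschitz functions -/

section Mollification

open MeasureTheory

open scoped Convolution

lemma integral_smul_mem_of_convex {X F : Type*} [MeasurableSpace X] {μ : Measure X}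
    [NormedAddCommGroup F] [NormedSpace ℝ F] [CompleteSpace F] {ρ : X → ℝ} {g : X → F} {S : Set F}
    (hS : Convex ℝ S) (hSc : IsClosed S) (hρm : Measurable ρ) (hρ : ∀ t, 0 ≤ ρ t)
    (hρ1 : ∫ t, ρ t ∂μ = 1) (hinteg : Integrable (fun t => ρ t • g t) μ)
    (hg : ∀ᵐ t ∂μ, ρ t ≠ 0 → g t ∈ S) : ∫ t, ρ t • g t ∂μ ∈ S := by
  set w : X → ℝ≥0∞ := fun t => ENNReal.ofReal (ρ t) with hw
  have hwm : Measurable w := hρm.ennreal_ofReal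
  have hw_lt : ∀ᵐ t ∂μ, w t < ∞ := ae_of_all _ fun _ => ENNReal.ofReal_lt_top
  have hw_smul (t : X) : (w t).toReal • g t = ρ t • g t := by
    rw [hw, ENNReal.toReal_ofReal (hρ t)]
  have hρi : Integrable ρ μ := by
    by_contra h
    simp [integral_undef h] at hρ1
  have : IsProbabilityMeasure (μ.withDensity w) := by
    constructor
    rw [withDensity_apply _ MeasurableSet.univ, Measure.restrict_univ,
      ← ofReal_integral_eq_lintegral_ofReal hρi (ae_of_all _ hρ), hρ1, ENNReal.ofReal_one]
  have hmean : ∫ t, g t ∂μ.withDensity w = ∫ t, ρ t • g t ∂μ := by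
    simp only [integral_withDensity_eq_integral_toReal_smul hwm hw_lt, hw_smul]
  rw [← hmean]
  refine hS.integral_mem hSc ?_ ?_
  · rw [ae_withDensity_iff hwm]
    filter_upwards [hg] with t ht hwt
    exact ht fun h0 => hwt (by simp [hw, h0])
  · rw [integrable_withDensity_iff_integrable_smul' hwm hw_lt]
    simpa only [hw_smul] using hinteg

variable {E : Type*} [NormedAddCommGroup E] [NormedSpace ℝ E] [FiniteDimensional ℝ E]
  [MeasurableSpace E] [BorelSpace E] {μ : Measure E} [μ.IsAddHaarMeasure]
  {f : E → ℝ} {K : NNReal} {ρ : E → ℝ}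

lemma integrable_and_hasFDerivAt_convolution (hρ : Continuous ρ) (hρs : HasCompactSupport ρ)
    (hf : LipschitzWith K f) (x : E) :
    Integrable (fun t => ρ t • fderiv ℝ f (x - t)) μ ∧
      HasFDerivAt (ρ ⋆[ContinuousLinearMap.lsmul ℝ ℝ, μ] f)
        (∫ t, ρ t • fderiv ℝ f (x - t) ∂μ) x := by
  have hshift (y : E) : Continuous fun t => ρ t • f (y - t) :=
    hρ.smul (hf.continuous.comp (continuous_const.sub continuous_id))
  have hdiff : ∀ᵐ t ∂μ, DifferentiableAt ℝ f (x - t) :=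
    (Measure.measurePreserving_sub_left μ x).quasiMeasurePreserving.ae hf.ae_differentiableAt
  have hmeas : Measurable fun t => fderiv ℝ f (x - t) :=
    (measurable_fderiv ℝ f).comp (measurable_const.sub measurable_id)
  refine hasFDerivAt_integral_of_dominated_loc_of_lip' (F := fun y t => ρ t • f (y - t))
    (bound := fun t => |ρ t| * K) univ_mem (fun y _ => (hshift y).aestronglyMeasurable)
    ((hshift x).integrable_of_hasCompactSupport hρs.smul_right)
    (hρ.aestronglyMeasurable.smul hmeas.aestronglyMeasurable) ?_
    ((hρ.integrable_of_hasCompactSupport hρs).abs.mul_const _) ?_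
  · refine Eventually.of_forall fun t y _ => ?_
    rw [← smul_sub, norm_smul, Real.norm_eq_abs, mul_assoc]
    gcongr
    simpa [dist_eq_norm] using hf.dist_le_mul (y - t) (x - t)
  · filter_upwards [hdiff] with t ht
    have hcomp := HasFDerivAt.comp x (f := fun y : E => y - t) ht.hasFDerivAt
      ((hasFDerivAt_id x).sub_const t)
    rw [ContinuousLinearMap.comp_id] at hcomp
    exact hcomp.const_smul (ρ t)

lemma exists_contDiff_fderiv_mem_of_convex (μ : Measure E) [μ.IsAddHaarMeasure]
    (hf : LipschitzWith K f) {r : ℝ} (hr : 0 < r) :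
    ∃ W : E → ℝ, ContDiff ℝ 2 W ∧ (∀ x, |W x - f x| ≤ K * r) ∧
      ∀ x (S : Set (E →L[ℝ] ℝ)), Convex ℝ S → IsClosed S →
        (∀ᵐ z ∂μ, z ∈ ball x r → fderiv ℝ f z ∈ S) → fderiv ℝ W x ∈ S := by
  let φ : ContDiffBump (0 : E) := ⟨r / 2, r, by positivity, by linarith⟩
  refine ⟨φ.normed μ ⋆[ContinuousLinearMap.lsmul ℝ ℝ, μ] f, ?_, fun x => ?_,
    fun x S hS hSc hxS => ?_⟩
  · exact φ.hasCompactSupport_normed.contDiff_convolution_left _ φ.contDiff_normed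
      hf.continuous.locallyIntegrable
  · rw [← Real.dist_eq]
    refine φ.dist_normed_convolution_le hf.continuous.aestronglyMeasurable fun y hy => ?_
    refine (hf.dist_le_mul y x).trans ?_
    gcongr
    exact (mem_ball.1 hy).le
  · obtain ⟨hinteg, hderiv⟩ := integrable_and_hasFDerivAt_convolution (μ := μ)
      (φ.continuous_normed (μ := μ)) φ.hasCompactSupport_normed hf x
    rw [hderiv.fderiv]
    refine integral_smul_mem_of_convex hS hSc φ.continuous_normed.measurable φ.nonneg_normed
      φ.integral_normed hinteg ?_
    filter_upwards [(Measure.measurePreserving_sub_left μ x).quasiMeasurePreserving.ae hxS]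
      with t ht hρt
    have htr : t ∈ ball (0 : E) r := φ.support_normed_eq (μ := μ) ▸ hρt
    exact ht (by simpa [dist_eq_norm] using htr)

end Mollification

/-! ### Smooth approximate subsolutions of convex Hamilton–Jacobi equations -/

section ApproximateSubsolutions

open MeasureTheory InnerProductSpace

variable {E : Type*} [NormedAddCommGroup E] [InnerProductSpace ℝ E] [FiniteDimensional ℝ E]
  {f : E → ℝ} {K : NNReal} {Ω C : Set E}

lemma norm_gradient_eq (f : E → ℝ) (x : E) : ‖gradient f x‖ = ‖fderiv ℝ f x‖ :=
  LinearIsometryEquiv.norm_map _ _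

lemma norm_gradient_le_of_lipschitzWith (hf : LipschitzWith K f) (x : E) :
    ‖gradient f x‖ ≤ K :=
  (norm_gradient_eq f x).trans_le (norm_fderiv_le_of_lipschitz ℝ hf)

lemma exists_pos_forall_ball_le_add {H : E → E → ℝ} (hΩ : IsOpen Ω) (hC : IsCompact C)
    (hCΩ : C ⊆ Ω) (hH : ContinuousOn (Function.uncurry H) (Ω ×ˢ univ)) (R : ℝ) {η : ℝ}
    (hη : 0 < η) :
    ∃ r > 0, ∀ x ∈ C, ∀ z ∈ ball x r, z ∈ Ω ∧ ∀ p ∈ closedBall (0 : E) R, H x p ≤ H z p + η := by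
  obtain ⟨r₁, hr₁, hsub⟩ := hC.exists_cthickening_subset_open hΩ hCΩ
  have hunif : UniformContinuousOn (Function.uncurry H) (cthickening r₁ C ×ˢ closedBall 0 R) :=
    (hC.cthickening.prod (isCompact_closedBall 0 R)).uniformContinuousOn_of_continuous
      (hH.mono (prod_mono hsub (subset_univ _)))
  obtain ⟨r₂, hr₂, hclose⟩ := Metric.uniformContinuousOn_iff_le.1 hunif η hη
  refine ⟨min r₁ r₂, lt_min hr₁ hr₂, fun x hx z hz => ?_⟩
  have hzC : z ∈ cthickening r₁ C :=
    closedBall_subset_cthickening hx r₁ ((mem_ball.1 hz).le.trans (min_le_left _ _))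
  refine ⟨hsub hzC, fun p hp => ?_⟩
  have hdist : dist (x, p) (z, p) ≤ r₂ := by
    rw [dist_prod_same_right, dist_comm]
    exact (mem_ball.1 hz).le.trans (min_le_right _ _)
  have habs := hclose (x, p) ⟨self_subset_cthickening C hx, hp⟩ (z, p) ⟨hzC, hp⟩ hdist
  linarith [(abs_le.1 habs).2, show Function.uncurry H (x, p) = H x p from rfl,
    show Function.uncurry H (z, p) = H z p from rfl]

variable [MeasurableSpace E] [BorelSpace E]

lemma exists_contDiff_approx_subsolution {H : E → E → ℝ} (hΩ : IsOpen Ω) (hC : IsCompact C)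
    (hCΩ : C ⊆ Ω) (hH : ContinuousOn (Function.uncurry H) (Ω ×ˢ univ))
    (hconv : ∀ x ∈ C, ConvexOn ℝ univ (H x)) (hf : LipschitzWith K f)
    (hsub : ∀ᵐ z, z ∈ Ω → H z (gradient f z) ≤ 0) {η : ℝ} (hη : 0 < η) :
    ∃ W : E → ℝ, ContDiff ℝ 2 W ∧ (∀ x, |W x - f x| ≤ η) ∧ ∀ x ∈ C, H x (gradient W x) ≤ η := by
  obtain ⟨r₀, hr₀, hnear⟩ := exists_pos_forall_ball_le_add hΩ hC hCΩ hH K hη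
  set r := min r₀ (η / (K + 1))
  have hr_pos : 0 < r := lt_min hr₀ (by positivity)
  obtain ⟨W, hW, hWf, hWS⟩ := exists_contDiff_fderiv_mem_of_convex volume hf hr_pos
  refine ⟨W, hW, fun x => (hWf x).trans ?_, fun x hx => ?_⟩
  · calc K * r ≤ (K + 1) * (η / (K + 1)) := by gcongr; exacts [by simp, min_le_right _ _]
      _ = η := by field_simp
  · have hHx : Continuous (H x) := by
      rw [← continuousOn_univ]
      exact hH.comp (f := fun p => (x, p)) (by fun_prop) fun p _ => ⟨hCΩ hx, mem_univ p⟩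
    have hclosed : IsClosed {p | H x p ≤ η} := isClosed_le hHx continuous_const
    have hconvex : Convex ℝ {p | H x p ≤ η} := by simpa using (hconv x hx).convex_le η
    refine hWS x ((toDual ℝ E).symm ⁻¹' {p | H x p ≤ η})
      (hconvex.linear_preimage (toDual ℝ E).symm.toLinearEquiv.toLinearMap)
      (hclosed.preimage (toDual ℝ E).symm.continuous) ?_
    filter_upwards [hsub] with z hz hzx
    obtain ⟨hzΩ, hHz⟩ := hnear x hx z (ball_subset_ball (min_le_left _ _) hzx)
    have hgrad := mem_closedBall_zero_iff.2 (norm_gradient_le_of_lipschitzWith hf z)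
    exact (hHz _ hgrad).trans (by linarith [hz hzΩ])

lemma abs_sub_le_of_ae_norm_gradient_le (hΩ : IsOpen Ω) (hΩc : Convex ℝ Ω)
    (hf : LipschitzWith K f) {c : ℝ} (hgrad : ∀ᵐ z, z ∈ Ω → ‖gradient f z‖ ≤ c) {x y : E}
    (hx : x ∈ Ω) (hy : y ∈ Ω) : |f x - f y| ≤ c * ‖x - y‖ := by
  have happrox (η : ℝ) (hη : 0 < η) : |f x - f y| ≤ (c + η) * ‖x - y‖ + 2 * η := by
    have hsub : segment ℝ y x ⊆ Ω := hΩc.segment_subset hy hx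
    obtain ⟨W, hW, hWf, hWgrad⟩ := exists_contDiff_approx_subsolution
      (H := fun _ p => ‖p‖ - c) (C := segment ℝ y x) hΩ
      (by rw [← convexHull_pair]; exact (toFinite _).isCompact_convexHull ℝ) hsub
      (by fun_prop) (fun _ _ => convexOn_univ_norm.sub (concaveOn_const c convex_univ)) hf
      (hgrad.mono fun z hz hzΩ => sub_nonpos.2 (hz hzΩ)) hη
    have hWxy := (convex_segment y x).norm_image_sub_le_of_norm_fderiv_le (C := c + η)
      (fun z _ => hW.differentiable two_ne_zero z)
      (fun z hz => by linarith [norm_gradient_eq W z, hWgrad z hz])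
      (left_mem_segment ℝ y x) (right_mem_segment ℝ y x)
    rw [Real.norm_eq_abs] at hWxy
    have hWx := abs_le.1 (hWf x)
    have hWy := abs_le.1 (hWf y)
    have hWxy := abs_le.1 hWxy
    exact abs_le.2 ⟨by linarith, by linarith⟩
  have hlim : Tendsto (fun η : ℝ => (c + η) * ‖x - y‖ + 2 * η) (𝓝[>] 0) (𝓝 (c * ‖x - y‖)) := by
    refine Tendsto.mono_left ?_ nhdsWithin_le_nhds
    exact Continuous.tendsto' (by fun_prop) _ _ (by ring)
  refine ge_of_tendsto hlim ?_
  filter_upwards [self_mem_nhdsWithin] with η hη using happrox η hη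

end ApproximateSubsolutions

/-! ### Viscosity subsolutions -/

section Viscosity

lemma gradient_inner_add_mul_norm_sub_sq {E : Type*} [NormedAddCommGroup E]
    [InnerProductSpace ℝ E] [CompleteSpace E] (p x : E) (c : ℝ) (y : E) :
    gradient (fun z => inner ℝ p z + c * ‖z - x‖ ^ 2) y = p + (2 * c) • (y - x) := by
  have hlin : HasFDerivAt (fun z : E => inner ℝ p z) (innerSL ℝ p) y :=
    (innerSL ℝ p).hasFDerivAt
  have hsq : HasFDerivAt (fun z : E => ‖z - x‖ ^ 2) (2 • innerSL ℝ (y - x)) y := by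
    simpa using ((hasFDerivAt_id y).sub_const x).norm_sq
  apply HasGradientAt.gradient
  rw [hasGradientAt_iff_hasFDerivAt]
  refine (hlin.add (hsq.const_mul c)).congr_fderiv ?_
  ext v
  simp only [map_sub, map_add, map_smul, add_apply, sub_apply, smul_apply, coe_innerSL_apply,
    InnerProductSpace.toDual_apply_apply, nsmul_eq_mul, Nat.cast_ofNat, smul_eq_mul]
  ring

variable {E : Type*} [NormedAddCommGroup E] [InnerProductSpace ℝ E] [FiniteDimensional ℝ E]

/- The paraboloid `⟨p, z⟩ + (η / ρ) ‖z - x‖²` with `p = ∇f x` exceeds the first-order expansion of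
`f` on the sphere of radius `ρ`, so `f` minus it is maximal over the ball at an interior point. -/
lemma exists_isLocalMax_sub_near_of_differentiableAt {f : E → ℝ} (hf : Continuous f) {x : E}
    (hx : DifferentiableAt ℝ f x) {η : ℝ} (hη : 0 < η) :
    ∃ φ : E → ℝ, ContDiff ℝ 1 φ ∧ ∃ y ∈ ball x η, IsLocalMax (fun z => f z - φ z) y ∧
      ‖gradient φ y - gradient f x‖ ≤ 2 * η := by
  set p := gradient f x with hp
  obtain ⟨R, hR, hexpand⟩ :=
    Metric.eventually_nhds_iff.1 (hx.hasFDerivAt.isLittleO.def (half_pos hη))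
  obtain ⟨ρ, hρ, hρmin⟩ := exists_between (lt_min hR hη)
  have hρR : ρ < R := hρmin.trans_le (min_le_left _ _)
  have hρη : ρ < η := hρmin.trans_le (min_le_right _ _)
  set φ : E → ℝ := fun z => inner ℝ p z + η / ρ * ‖z - x‖ ^ 2 with hφ
  have hφ1 : ContDiff ℝ 1 φ := (contDiff_const.inner ℝ contDiff_id).add
    (contDiff_const.mul ((contDiff_id.sub contDiff_const).norm_sq ℝ))
  obtain ⟨y, hyρ, hymax⟩ := (isCompact_closedBall x ρ).exists_isMaxOn
    ⟨x, mem_closedBall_self hρ.le⟩ (hf.sub hφ1.continuous).continuousOn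
  have hylt : dist y x < ρ := by
    refine lt_of_le_of_ne hyρ fun hyeq => ?_
    have hfy := hexpand (hyeq.trans_lt hρR)
    rw [← inner_gradient_left, ← hp, ← dist_eq_norm y x, hyeq, inner_sub_right] at hfy
    have hyx : f x - φ x ≤ f y - φ y := hymax (mem_closedBall_self hρ.le)
    have hsphere : η / ρ * ρ ^ 2 = η * ρ := by field_simp
    simp only [hφ, sub_self, norm_zero, ← dist_eq_norm y x, hyeq, hsphere] at hyx
    nlinarith [(le_abs_self _).trans hfy, mul_pos hη hρ]
  refine ⟨φ, hφ1, y, mem_ball.2 (hylt.trans hρη), hymax.isLocalMax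
    (mem_of_superset (isOpen_ball.mem_nhds (mem_ball.2 hylt)) ball_subset_closedBall), ?_⟩
  rw [gradient_inner_add_mul_norm_sub_sq, add_sub_cancel_left, norm_smul,
    Real.norm_of_nonneg (by positivity), ← dist_eq_norm]
  calc 2 * (η / ρ) * dist y x ≤ 2 * (η / ρ) * ρ := by gcongr
    _ = 2 * η := by field_simp

variable {H : Eu n → Eu n → ℝ} {Ω : Set (Eu n)} {f g : Eu n → ℝ}

lemma ViscSub.apply_gradient_nonpos (hf : ViscSub H Ω f) (hΩ : IsOpen Ω)
    (hH : ContinuousOn (Function.uncurry H) (Ω ×ˢ univ)) (hfc : Continuous f) {x : Eu n}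
    (hx : x ∈ Ω) (hfx : DifferentiableAt ℝ f x) : H x (gradient f x) ≤ 0 := by
  by_contra! hpos
  have hnhds : Ω ×ˢ univ ∈ 𝓝 (x, gradient f x) := prod_mem_nhds (hΩ.mem_nhds hx) univ_mem
  have hev : ∀ᶠ z : Eu n × Eu n in 𝓝 (x, gradient f x), z.1 ∈ Ω ∧ 0 < H z.1 z.2 := by
    filter_upwards [hnhds, (hH.continuousAt hnhds).eventually (lt_mem_nhds hpos)] with z hz hHz
    exact ⟨hz.1, hHz⟩
  obtain ⟨e, he, hball⟩ := Metric.eventually_nhds_iff.1 hev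
  obtain ⟨φ, hφ, y, hy, hmax, hgrad⟩ :=
    exists_isLocalMax_sub_near_of_differentiableAt hfc hfx (η := e / 4) (by positivity)
  have hyx : dist y x < e := (mem_ball.1 hy).trans (by linarith)
  have hgx : dist (gradient φ y) (gradient f x) < e := by
    rw [dist_eq_norm]
    linarith
  obtain ⟨hyΩ, hHy⟩ := hball (y := (y, gradient φ y)) (max_lt hyx hgx)
  exact hHy.not_ge (hf φ hφ y hyΩ (hmax.on Ω))

lemma viscSub_zero (hΩ : IsOpen Ω) (hH : ∀ x ∈ Ω, H x 0 ≤ 0) : ViscSub H Ω fun _ => 0 := by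
  intro φ _ x hx hmax
  have hmin : IsLocalMin φ x := by
    simpa using (hmax.isLocalMax (hΩ.mem_nhds hx)).neg
  rw [gradient, hmin.fderiv_eq_zero, map_zero]
  exact hH x hx

lemma ViscSub.max (hf : ViscSub H Ω f) (hg : ViscSub H Ω g) :
    ViscSub H Ω fun x => max (f x) (g x) := by
  intro φ hφ x hx hmax
  rcases le_total (f x) (g x) with h | h
  · refine hg φ hφ x hx ?_
    filter_upwards [hmax] with y hy
    simp only [max_eq_right h] at hy
    linarith [le_max_right (f y) (g y)]
  · refine hf φ hφ x hx ?_
    filter_upwards [hmax] with y hy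
    simp only [max_eq_left h] at hy
    linarith [le_max_left (f y) (g y)]

lemma ViscSub.congr (hf : ViscSub H Ω f) (hfg : EqOn f g Ω) : ViscSub H Ω g := by
  intro φ hφ x hx hmax
  refine hf φ hφ x hx ?_
  filter_upwards [hmax, self_mem_nhdsWithin] with y hy hyΩ
  rwa [hfg hx, hfg hyΩ]

/-- The competitors in the definition of the quasi-potential: Lipschitz viscosity subsolutions of
`H(x, Du) = 0` in `Ω` that vanish at the origin. They are taken Lipschitz on the whole space, which
costs nothing since a Lipschitz function on `closure Ω` extends. -/
structure IsLipSubsolution (H : Eu n → Eu n → ℝ) (Ω : Set (Eu n)) (f : Eu n → ℝ) : Prop where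
  lip : ∃ K : NNReal, LipschitzWith K f
  map_zero : f 0 = 0
  viscSub : ViscSub H Ω f

namespace IsLipSubsolution

lemma zero (hΩ : IsOpen Ω) (hH : ∀ x ∈ Ω, H x 0 ≤ 0) : IsLipSubsolution H Ω fun _ => 0 :=
  ⟨⟨0, LipschitzWith.const 0⟩, rfl, viscSub_zero hΩ hH⟩

lemma max (hf : IsLipSubsolution H Ω f) (hg : IsLipSubsolution H Ω g) :
    IsLipSubsolution H Ω fun x => max (f x) (g x) := by
  obtain ⟨K, hK⟩ := hf.lip
  obtain ⟨K', hK'⟩ := hg.lip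
  exact ⟨⟨_, hK.max hK'⟩, by simp [hf.map_zero, hg.map_zero], hf.viscSub.max hg.viscSub⟩

lemma continuous (hf : IsLipSubsolution H Ω f) : Continuous f :=
  hf.lip.choose_spec.continuous

lemma ae_apply_gradient_nonpos (hf : IsLipSubsolution H Ω f) (hΩ : IsOpen Ω)
    (hH : ContinuousOn (Function.uncurry H) (Ω ×ˢ univ)) :
    ∀ᵐ z, z ∈ Ω → H z (gradient f z) ≤ 0 := by
  obtain ⟨K, hK⟩ := hf.lip
  filter_upwards [hK.ae_differentiableAt] with z hz hzΩ
  exact hf.viscSub.apply_gradient_nonpos hΩ hH hf.continuous hzΩ hz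

end IsLipSubsolution

end Viscosity

/-! ### The Hamiltonian and the quasi-potential -/

section QuasiPotential

variable {α : Eu n → Matrix (Fin n) (Fin n) ℝ} {b : Eu n → Eu n} {Ω : Set (Eu n)} {θ m d : ℝ}
  {x p : Eu n}

lemma Ham_zero (α : Eu n → Matrix (Fin n) (Fin n) ℝ) (b : Eu n → Eu n) (x : Eu n) :
    Ham α b x 0 = 0 := by simp [Ham, mquad, dotp]

lemma convexOn_Ham (hα : (α x).PosSemidef) : ConvexOn ℝ univ (Ham α b x) := by
  refine (convexOn_mquad hα).add ?_
  simp only [funext (dotp_eq_inner (b x))]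
  exact (innerSL ℝ (b x)).toLinearMap.convexOn convex_univ

lemma continuousOn_mquad {Y : Type*} [TopologicalSpace Y] {s : Set Y}
    {A : Y → Matrix (Fin n) (Fin n) ℝ} {q : Y → Eu n} (hA : ContinuousOn A s)
    (hq : ContinuousOn q s) : ContinuousOn (fun y => mquad (A y) (q y)) s := by
  unfold mquad
  fun_prop

lemma continuousOn_uncurry_Ham (hα : ContinuousOn α Ω) (hb : ContinuousOn b Ω) :
    ContinuousOn (Function.uncurry (Ham α b)) (Ω ×ˢ univ) := by
  have hα' : ContinuousOn (fun z : Eu n × Eu n => α z.1) (Ω ×ˢ univ) :=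
    hα.comp continuousOn_fst fun _ hz => hz.1
  have hb' : ContinuousOn (fun z : Eu n × Eu n => b z.1) (Ω ×ˢ univ) :=
    hb.comp continuousOn_fst fun _ hz => hz.1
  have hdrift : ContinuousOn (fun z : Eu n × Eu n => dotp (b z.1) z.2) (Ω ×ˢ univ) := by
    simp only [dotp_eq_inner]
    exact hb'.inner (𝕜 := ℝ) continuousOn_snd
  exact (continuousOn_mquad hα' continuousOn_snd).add hdrift

lemma norm_le_div_of_Ham_nonpos (hθ : 0 < θ) (hα : memS θ (α x)) (hp : Ham α b x p ≤ 0) :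
    ‖p‖ ≤ ‖b x‖ / θ := by
  have hquad : θ * ‖p‖ ^ 2 ≤ ‖b x‖ * ‖p‖ := by
    have hbp := abs_le.1 (abs_real_inner_le_norm (b x) p)
    rw [← dotp_eq_inner] at hbp
    unfold Ham at hp
    linarith [(hα.2 p).1]
  rw [le_div_iff₀ hθ]
  rcases (norm_nonneg p).eq_or_lt with h0 | hpos
  · simp [← h0]
  · exact le_of_mul_le_mul_right (by linarith) hpos

lemma exists_ball_forall_abs_sub_le (hθ : 0 < θ) (hΩ : IsOpen Ω) (hα : ContinuousOn α Ω)
    (hb : ContinuousOn b Ω) (hαS : ∀ y ∈ Ω, memS θ (α y)) (hx : x ∈ Ω) :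
    ∃ R > 0, ∃ L > 0, ball x R ⊆ Ω ∧ ∀ f, IsLipSubsolution (Ham α b) Ω f →
      ∀ y ∈ ball x R, ∀ z ∈ ball x R, |f y - f z| ≤ L * ‖y - z‖ := by
  have hnear : ∀ᶠ y in 𝓝 x, y ∈ Ω ∧ ‖b y‖ ≤ ‖b x‖ + 1 := by
    filter_upwards [hΩ.mem_nhds hx, (hb.continuousAt (hΩ.mem_nhds hx)).norm.eventually
      (gt_mem_nhds (lt_add_one ‖b x‖))] with y hyΩ hby using ⟨hyΩ, hby.le⟩
  obtain ⟨R, hR, hball⟩ := Metric.eventually_nhds_iff_ball.1 hnear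
  refine ⟨R, hR, (‖b x‖ + 1) / θ, by positivity, fun y hy => (hball y hy).1, ?_⟩
  intro f hf y hy z hz
  obtain ⟨K, hK⟩ := hf.lip
  refine abs_sub_le_of_ae_norm_gradient_le isOpen_ball (convex_ball x R) hK ?_ hy hz
  filter_upwards [hf.ae_apply_gradient_nonpos hΩ (continuousOn_uncurry_Ham hα hb)] with w hw hwR
  obtain ⟨hwΩ, hbw⟩ := hball w hwR
  exact (norm_le_div_of_Ham_nonpos hθ (hαS w hwΩ) (hw hwΩ)).trans (by gcongr)

lemma Vq_nonneg (α : Eu n → Matrix (Fin n) (Fin n) ℝ) (b : Eu n → Eu n) (hΩ : IsOpen Ω)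
    (x : Eu n) : 0 ≤ Vq α b Ω x :=
  Real.sSup_nonneg' ⟨0, ⟨fun _ => 0, ⟨0, (LipschitzWith.const 0).lipschitzOnWith⟩, rfl,
    viscSub_zero hΩ fun y _ => (Ham_zero α b y).le, rfl⟩, le_rfl⟩

lemma lt_Vq_of_lt_Mq (hΩ : IsOpen Ω) (hm : m < Mq α b Ω) (hx : x ∈ frontier Ω) :
    m < Vq α b Ω x := by
  refine hm.trans_le (csInf_le ⟨0, ?_⟩ (mem_image_of_mem _ hx))
  rintro _ ⟨y, -, rfl⟩
  exact Vq_nonneg α b hΩ y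

lemma exists_isLipSubsolution_lt (hΩ : IsOpen Ω) (h0 : (0 : Eu n) ∈ Ω) (hx : x ∈ closure Ω)
    (hm : m < Vq α b Ω x) : ∃ f, IsLipSubsolution (Ham α b) Ω f ∧ m < f x := by
  rw [Vq] at hm
  obtain ⟨r, ⟨u, ⟨K, hK⟩, hu0, huv, rfl⟩, hr⟩ := exists_lt_of_lt_csSup
    (by exact ⟨0, fun _ => 0, ⟨0, (LipschitzWith.const 0).lipschitzOnWith⟩, rfl,
      viscSub_zero hΩ fun y _ => (Ham_zero α b y).le, rfl⟩) hm
  obtain ⟨f, hf, huf⟩ := hK.extend_real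
  exact ⟨f, ⟨⟨K, hf⟩, by rw [← huf (subset_closure h0), hu0], huv.congr (huf.mono subset_closure)⟩,
    by rwa [← huf hx]⟩

lemma exists_isLipSubsolution_ge_near (hθ : 0 < θ) (hΩ : IsOpen Ω) (h0 : (0 : Eu n) ∈ Ω)
    (hα : ContinuousOn α Ω) (hb : ContinuousOn b Ω) (hαS : ∀ y ∈ Ω, memS θ (α y)) (hx : x ∈ Ω)
    (m : ℝ) (hd : 0 < d) :
    ∃ f, IsLipSubsolution (Ham α b) Ω f ∧ ∀ᶠ y in 𝓝 x, m < Vq α b Ω y → m - d ≤ f y := by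
  obtain ⟨R, hR, L, hL, hRΩ, hlip⟩ := exists_ball_forall_abs_sub_le hθ hΩ hα hb hαS hx
  set s := min R (d / (2 * L))
  have hs0 : 0 < s := lt_min hR (by positivity)
  have hsR : ball x s ⊆ ball x R := ball_subset_ball (min_le_left _ _)
  by_cases hex : ∃ y ∈ ball x s, m < Vq α b Ω y
  · obtain ⟨y, hy, hVy⟩ := hex
    obtain ⟨f, hf, hfy⟩ :=
      exists_isLipSubsolution_lt hΩ h0 (subset_closure (hRΩ (hsR hy))) hVy
    refine ⟨f, hf, ?_⟩
    filter_upwards [ball_mem_nhds x hs0] with z hz _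
    have hzy : L * ‖z - y‖ ≤ d := by
      calc L * ‖z - y‖ ≤ L * (d / (2 * L) + d / (2 * L)) := by
            rw [← dist_eq_norm]
            gcongr
            refine (dist_triangle_right z y x).trans (add_le_add ?_ ?_)
            · exact (mem_ball.1 hz).le.trans (min_le_right _ _)
            · exact (mem_ball.1 hy).le.trans (min_le_right _ _)
        _ = d := by field_simp; norm_num
    linarith [(abs_le.1 (hlip f hf z (hsR hz) y (hsR hy))).1]
  · push Not at hex
    refine ⟨_, .zero hΩ fun y _ => (Ham_zero α b y).le, ?_⟩
    filter_upwards [ball_mem_nhds x hs0] with z hz hVz using absurd hVz (hex z hz).not_gt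

lemma exists_isLipSubsolution_ge (hθ : 0 < θ) (hΩ : IsOpen Ω) (hΩb : Bornology.IsBounded Ω)
    (h0 : (0 : Eu n) ∈ Ω) (hα : ContinuousOn α Ω) (hb : ContinuousOn b Ω)
    (hαS : ∀ y ∈ Ω, memS θ (α y)) (hd : 0 < d) (hm : ∀ x ∈ frontier Ω, m < Vq α b Ω x) :
    ∃ f, IsLipSubsolution (Ham α b) Ω f ∧ ∀ x ∈ closure Ω, m < Vq α b Ω x → m - d ≤ f x := by
  refine hΩb.isCompact_closure.induction_on
    (p := fun s => ∃ f, IsLipSubsolution (Ham α b) Ω f ∧ ∀ x ∈ s, m < Vq α b Ω x → m - d ≤ f x)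
    ⟨_, .zero hΩ fun y _ => (Ham_zero α b y).le, by simp⟩ ?_ ?_ fun x hx => ?_
  · rintro s t hst ⟨f, hf, hft⟩
    exact ⟨f, hf, fun x hx => hft x (hst hx)⟩
  · rintro s t ⟨f, hf, hfs⟩ ⟨g, hg, hgt⟩
    refine ⟨_, hf.max hg, ?_⟩
    rintro x (hx | hx) hV
    · exact (hfs x hx hV).trans (le_max_left _ _)
    · exact (hgt x hx hV).trans (le_max_right _ _)
  · suffices ∃ f, IsLipSubsolution (Ham α b) Ω f ∧ ∀ᶠ y in 𝓝 x, m < Vq α b Ω y → m - d ≤ f y by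
      obtain ⟨f, hf, hev⟩ := this
      exact ⟨_, mem_nhdsWithin_of_mem_nhds hev, f, hf, fun y hy => hy⟩
    by_cases hxΩ : x ∈ Ω
    · exact exists_isLipSubsolution_ge_near hθ hΩ h0 hα hb hαS hxΩ m hd
    · have hxfr : x ∈ frontier Ω := ⟨hx, by rwa [hΩ.interior_eq]⟩
      obtain ⟨f, hf, hfx⟩ := exists_isLipSubsolution_lt hΩ h0 hx (hm x hxfr)
      refine ⟨f, hf, ?_⟩
      filter_upwards [hf.continuous.continuousAt.eventually (lt_mem_nhds hfx)] with y hy _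
      linarith

end QuasiPotential

/-! ### Flows and the Lyapunov function -/

section Flow

variable {E : Type*} [NormedAddCommGroup E] [NormedSpace ℝ E] {b : E → E} {X : ℝ → E → E}
  {K : NNReal} {ψ : E → ℝ} {τ : ℝ} {x : E}

/-- `X t x` is the position at time `t ∈ ℝ` of the solution of `Ẋ = b(X)` starting from `x`. -/
structure IsFlow (b : E → E) (X : ℝ → E → E) : Prop where
  map_zero : ∀ x, X 0 x = x
  hasDerivAt : ∀ x t, HasDerivAt (fun s => X s x) (b (X t x)) t

/-- The integral of `ψ` along the orbit of `x` up to time `τ`. Its derivative along the flow is a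
boundary term, which makes it a Lyapunov function wherever `ψ` vanishes at time `τ`. -/
def orbitIntegral (X : ℝ → E → E) (ψ : E → ℝ) (τ : ℝ) (x : E) : ℝ :=
  ∫ t in (0 : ℝ)..τ, ψ (X t x)

lemma dist_le_mul_exp_of_hasDerivAt (hb : LipschitzWith K b) {f g : ℝ → E}
    (hf : ∀ t, HasDerivAt f (b (f t)) t) (hg : ∀ t, HasDerivAt g (b (g t)) t) {t : ℝ}
    (ht : 0 ≤ t) : dist (f t) (g t) ≤ dist (f 0) (g 0) * Real.exp (K * t) := by
  simpa using dist_le_of_trajectories_ODE (v := fun _ => b) (fun _ => hb)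
    (fun s _ => (hf s).continuousAt.continuousWithinAt) (fun s _ => (hf s).hasDerivWithinAt)
    (fun s _ => (hg s).continuousAt.continuousWithinAt) (fun s _ => (hg s).hasDerivWithinAt)
    le_rfl t (right_mem_Icc.2 ht)

namespace IsFlow

lemma continuous_orbit (hX : IsFlow b X) (x : E) : Continuous fun t => X t x :=
  continuous_iff_continuousAt.2 fun t => (hX.hasDerivAt x t).continuousAt

lemma dist_le (hX : IsFlow b X) (hb : LipschitzWith K b) (x y : E) {t : ℝ} (ht : 0 ≤ t) :
    dist (X t x) (X t y) ≤ dist x y * Real.exp (K * t) := by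
  simpa only [hX.map_zero] using
    dist_le_mul_exp_of_hasDerivAt hb (hX.hasDerivAt x) (hX.hasDerivAt y) ht

lemma continuous (hX : IsFlow b X) (hb : LipschitzWith K b) {t : ℝ} (ht : 0 ≤ t) :
    Continuous (X t) := by
  refine (LipschitzWith.of_dist_le_mul (K := (Real.exp (K * t)).toNNReal) fun x y => ?_).continuous
  rw [Real.coe_toNNReal _ (Real.exp_pos _).le, mul_comm]
  exact hX.dist_le hb x y ht

lemma map_add (hX : IsFlow b X) (hb : LipschitzWith K b) (x : E) (h : ℝ) {t : ℝ} (ht : 0 ≤ t) :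
    X (t + h) x = X t (X h x) := by
  have hshift : ∀ s, HasDerivAt (fun s => X (s + h) x) (b (X (s + h) x)) s := fun s =>
    (hX.hasDerivAt x (s + h)).comp_add_const s h
  simpa [hX.map_zero] using dist_le_mul_exp_of_hasDerivAt hb hshift (hX.hasDerivAt (X h x)) ht

lemma lipschitzWith_orbitIntegral (hX : IsFlow b X) (hb : LipschitzWith K b)
    (hψ : LipschitzWith 1 ψ) (hτ : 0 ≤ τ) :
    LipschitzWith (τ * Real.exp (K * τ)).toNNReal (orbitIntegral X ψ τ) := by
  have hinteg : ∀ x, IntervalIntegrable (fun t => ψ (X t x)) MeasureTheory.volume 0 τ := fun x =>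
    (hψ.continuous.comp (hX.continuous_orbit x)).intervalIntegrable _ _
  have hpt : ∀ x y, ∀ t ∈ Icc 0 τ,
      ψ (X t x) ≤ ψ (X t y) + Real.exp (K * τ) * dist x y := fun x y t ht =>
    calc ψ (X t x) ≤ ψ (X t y) + dist (X t x) (X t y) := by
          simpa using LipschitzWith.le_add_mul hψ (X t x) (X t y)
      _ ≤ ψ (X t y) + dist x y * Real.exp (K * t) := by gcongr; exact hX.dist_le hb x y ht.1
      _ ≤ ψ (X t y) + Real.exp (K * τ) * dist x y := by rw [mul_comm]; gcongr; exact ht.2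
  refine LipschitzWith.of_le_add_mul _ fun x y => ?_
  rw [Real.coe_toNNReal _ (by positivity)]
  calc orbitIntegral X ψ τ x
      ≤ ∫ t in (0 : ℝ)..τ, (ψ (X t y) + Real.exp (K * τ) * dist x y) :=
        intervalIntegral.integral_mono_on hτ (hinteg x)
          ((hinteg y).add intervalIntegrable_const) (hpt x y)
    _ = orbitIntegral X ψ τ y + τ * Real.exp (K * τ) * dist x y := by
        rw [intervalIntegral.integral_add (hinteg y) intervalIntegrable_const,
          intervalIntegral.integral_const, orbitIntegral, smul_eq_mul, sub_zero, mul_assoc]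

lemma orbitIntegral_apply_flow (hX : IsFlow b X) (hb : LipschitzWith K b) (hψ : Continuous ψ)
    (hτ : 0 ≤ τ) (x : E) (h : ℝ) :
    orbitIntegral X ψ τ (X h x) = orbitIntegral X ψ (τ + h) x - orbitIntegral X ψ h x := by
  have hinteg : ∀ u v, IntervalIntegrable (fun t => ψ (X t x)) MeasureTheory.volume u v :=
    fun u v => (hψ.comp (hX.continuous_orbit x)).intervalIntegrable u v
  have hshift : EqOn (fun t => ψ (X t (X h x))) (fun t => ψ (X (t + h) x)) (uIcc 0 τ) := by
    intro t ht
    rw [uIcc_of_le hτ] at ht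
    simp only [hX.map_add hb x h ht.1]
  rw [orbitIntegral, intervalIntegral.integral_congr hshift,
    intervalIntegral.integral_comp_add_right (fun t => ψ (X t x)), zero_add]
  exact (intervalIntegral.integral_interval_sub_left (hinteg _ _) (hinteg _ _)).symm

lemma fderiv_orbitIntegral (hX : IsFlow b X) (hb : LipschitzWith K b) (hψ : Continuous ψ)
    (hτ : 0 ≤ τ) (hx : DifferentiableAt ℝ (orbitIntegral X ψ τ) x) :
    fderiv ℝ (orbitIntegral X ψ τ) x (b x) = ψ (X τ x) - ψ x := by
  have hchain : HasDerivAt (fun h => orbitIntegral X ψ τ (X h x))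
      (fderiv ℝ (orbitIntegral X ψ τ) x (b x)) 0 := by
    have horbit := hX.hasDerivAt x 0
    rw [hX.map_zero] at horbit
    have hL : HasFDerivAt (orbitIntegral X ψ τ) (fderiv ℝ (orbitIntegral X ψ τ) x) (X 0 x) := by
      rw [hX.map_zero]
      exact hx.hasFDerivAt
    exact hL.comp_hasDerivAt (0 : ℝ) horbit
  have hprim : ∀ u, HasDerivAt (fun u => orbitIntegral X ψ u x) (ψ (X u x)) u := fun u =>
    ((hψ.comp (hX.continuous_orbit x)).integral_hasStrictDerivAt 0 u).hasDerivAt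
  have hboundary : HasDerivAt (fun h => orbitIntegral X ψ τ (X h x)) (ψ (X τ x) - ψ x) 0 := by
    simp only [hX.orbitIntegral_apply_flow hb hψ hτ]
    have hdiff := ((hprim (τ + 0)).comp_const_add τ 0).sub (hprim 0)
    rw [add_zero, hX.map_zero] at hdiff
    exact hdiff
  exact hchain.unique hboundary

end IsFlow

end Flow

section Lyapunov

variable {b : Eu n → Eu n} {X : ℝ → Eu n → Eu n} {K : NNReal} {C : Set (Eu n)} {s : ℝ}

lemma GAS.isFlow (hX : GAS b X) : IsFlow b X := ⟨hX.1, hX.2.1⟩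

lemma GAS.flow_zero (hX : GAS b X) {t : ℝ} (ht : 0 ≤ t) : X t 0 = 0 := by
  refine norm_le_zero_iff.1 (le_of_forall_gt fun ε hε => ?_)
  obtain ⟨δ, hδ, hstable⟩ := hX.2.2.2 ε hε
  exact hstable 0 (by rwa [norm_zero]) t ht

lemma GAS.exists_nhds_forall_norm_lt (hX : GAS b X) (hb : LipschitzWith K b) (hs : 0 < s)
    (x : Eu n) : ∃ U ∈ 𝓝 x, ∃ τ ≥ (0 : ℝ), ∀ y ∈ U, ∀ t ≥ τ, ‖X t y‖ < s := by
  obtain ⟨r, hr, hstable⟩ := hX.2.2.2 s hs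
  have hnear : ∀ᶠ t in atTop, ‖X t x‖ < r :=
    (tendsto_zero_iff_norm_tendsto_zero.1 (hX.2.2.1 x)).eventually (gt_mem_nhds hr)
  obtain ⟨τ, hτr, hτ⟩ := (hnear.and (eventually_ge_atTop 0)).exists
  have hopen : IsOpen {y | ‖X τ y‖ < r} :=
    isOpen_lt (hX.isFlow.continuous hb hτ).norm continuous_const
  refine ⟨_, hopen.mem_nhds hτr, τ, hτ, fun y hy t ht => ?_⟩
  rw [← sub_add_cancel t τ, hX.isFlow.map_add hb y τ (sub_nonneg.2 ht)]
  exact hstable _ hy _ (sub_nonneg.2 ht)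

lemma GAS.exists_forall_norm_lt_of_isCompact (hX : GAS b X) (hb : LipschitzWith K b)
    (hC : IsCompact C) (hs : 0 < s) : ∃ τ ≥ (0 : ℝ), ∀ x ∈ C, ∀ t ≥ τ, ‖X t x‖ < s := by
  refine hC.induction_on (p := fun D => ∃ τ ≥ (0 : ℝ), ∀ x ∈ D, ∀ t ≥ τ, ‖X t x‖ < s)
    ⟨0, le_rfl, by simp⟩ ?_ ?_ fun x _ => ?_
  · rintro D D' hDD' ⟨τ, hτ, hD'⟩
    exact ⟨τ, hτ, fun x hx => hD' x (hDD' hx)⟩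
  · rintro D D' ⟨τ, hτ, hD⟩ ⟨σ, -, hD'⟩
    refine ⟨max τ σ, le_max_of_le_left hτ, ?_⟩
    rintro x (hx | hx) t ht
    · exact hD x hx t ((le_max_left _ _).trans ht)
    · exact hD' x hx t ((le_max_right _ _).trans ht)
  · obtain ⟨U, hU, hattr⟩ := hX.exists_nhds_forall_norm_lt hb hs x
    exact ⟨U, mem_nhdsWithin_of_mem_nhds hU, hattr⟩

lemma GAS.exists_lyapunov (hX : GAS b X) (hb : LipschitzWith K b) (hC : IsCompact C)
    (hs : 0 < s) : ∃ (L : Eu n → ℝ) (M : NNReal), LipschitzWith M L ∧ (∀ x, 0 ≤ L x) ∧ L 0 = 0 ∧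
      ∀ x ∈ C, DifferentiableAt ℝ L x → fderiv ℝ L x (b x) = -max (‖x‖ - s) 0 := by
  obtain ⟨τ, hτ, hattr⟩ := hX.exists_forall_norm_lt_of_isCompact hb hC hs
  set ψ : Eu n → ℝ := fun x => max (‖x‖ - s) 0
  have hψ : LipschitzWith 1 ψ := (LipschitzWith.of_le_add fun x y => by
    linarith [norm_le_norm_add_norm_sub' x y, dist_eq_norm x y]).max_const 0
  have hψ_zero : ∀ x, ‖x‖ ≤ s → ψ x = 0 := fun x hx => max_eq_right (sub_nonpos.2 hx)
  refine ⟨orbitIntegral X ψ τ, _, hX.isFlow.lipschitzWith_orbitIntegral hb hψ hτ,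
    fun x => intervalIntegral.integral_nonneg hτ fun t _ => le_max_right _ _, ?_,
    fun x hx hdiff => ?_⟩
  · refine intervalIntegral.integral_zero_ae (.of_forall fun t ht => ?_)
    rw [uIoc_of_le hτ] at ht
    rw [hX.flow_zero ht.1.le]
    exact hψ_zero 0 (by rw [norm_zero]; exact hs.le)
  · rw [hX.isFlow.fderiv_orbitIntegral hb hψ.continuous hτ hdiff,
      hψ_zero _ (hattr x hx τ le_rfl).le, zero_sub]

end Lyapunov

/-! ### A smooth potential that is strict away from the origin -/

section StrictPotential

variable {α : Eu n → Matrix (Fin n) (Fin n) ℝ} {b : Eu n → Eu n} {X : ℝ → Eu n → Eu n}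
  {Ω : Set (Eu n)} {θ m d s μ l : ℝ} {K Kb : NNReal} {f g : Eu n → ℝ} {x : Eu n}

/-- The profile of the defect allowed in a subsolution inequality `H(x, Du) ≤ μ * defect s x`:
positive near the origin and negative outside the ball of radius `2 * s`. -/
def defect (s : ℝ) (x : Eu n) : ℝ := s / 4 - max (‖x‖ - s) 0

lemma continuous_defect (s : ℝ) : Continuous (defect s : Eu n → ℝ) := by
  unfold defect
  fun_prop

lemma defect_le (s : ℝ) (x : Eu n) : defect s x ≤ s / 4 :=
  sub_le_self _ (le_max_right _ _)

lemma defect_le_of_le_norm (hx : 2 * s ≤ ‖x‖) : defect s x ≤ -(3 * s / 4) := by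
  unfold defect
  linarith [le_max_left (‖x‖ - s) 0]

lemma lipschitzWith_convexComb (hl : l ∈ Icc (0 : ℝ) 1) (hf : LipschitzWith K f)
    (hg : LipschitzWith K g) : LipschitzWith K fun x => (1 - l) * f x + l * g x := by
  refine LipschitzWith.of_le_add_mul _ fun x y => ?_
  have hfxy := mul_le_mul_of_nonneg_left (hf.le_add_mul x y) (sub_nonneg.2 hl.2)
  have hgxy := mul_le_mul_of_nonneg_left (hg.le_add_mul x y) hl.1
  linarith

lemma gradient_convexComb (hf : DifferentiableAt ℝ f x) (hg : DifferentiableAt ℝ g x) (l : ℝ) :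
    gradient (fun y => (1 - l) * f y + l * g y) x = (1 - l) • gradient f x + l • gradient g x := by
  have hderiv := (hf.hasFDerivAt.const_mul (1 - l)).add (hg.hasFDerivAt.const_mul l)
  rw [gradient, HasFDerivAt.fderiv (f := fun y => (1 - l) * f y + l * g y) hderiv, map_add,
    map_smul, map_smul, gradient, gradient]

lemma Ham_gradient_convexComb_le (hα : (α x).PosSemidef) (hl : l ∈ Icc (0 : ℝ) 1)
    (hf : DifferentiableAt ℝ f x) (hg : DifferentiableAt ℝ g x)
    (hfx : Ham α b x (gradient f x) ≤ 0) :
    Ham α b x (gradient (fun y => (1 - l) * f y + l * g y) x) ≤ l * Ham α b x (gradient g x) := by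
  rw [gradient_convexComb hf hg]
  have hconv := (convexOn_Ham (b := b) hα).2 (mem_univ (gradient f x)) (mem_univ (gradient g x))
    (sub_nonneg.2 hl.2) hl.1 (sub_add_cancel 1 l)
  simp only [smul_eq_mul] at hconv
  linarith [mul_nonpos_of_nonneg_of_nonpos (sub_nonneg.2 hl.2) hfx]

lemma lipschitzWith_const_mul {r : ℝ} (hr : 0 ≤ r) (hf : LipschitzWith K f) :
    LipschitzWith (r.toNNReal * K) fun x => r * f x := by
  refine LipschitzWith.of_le_add_mul _ fun x y => ?_
  rw [NNReal.coe_mul, Real.coe_toNNReal r hr]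
  linarith [mul_le_mul_of_nonneg_left (hf.le_add_mul x y) hr]

lemma Ham_gradient_const_mul_le (hθ : 0 < θ) (hα : memS θ (α x)) {r : ℝ}
    (hf : LipschitzWith K f) (hfx : DifferentiableAt ℝ f x) :
    Ham α b x (gradient (fun y => r * f y) x) ≤
      r ^ 2 * (θ⁻¹ * K ^ 2) + r * fderiv ℝ f x (b x) := by
  have hgrad : gradient (fun y => r * f y) x = r • gradient f x := by
    simpa using gradient_convexComb (differentiableAt_const (0 : ℝ)) hfx r
  have hquad : mquad (α x) (gradient f x) ≤ θ⁻¹ * K ^ 2 :=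
    ((hα.2 _).2).trans (by gcongr; exact norm_gradient_le_of_lipschitzWith hf x)
  have hdrift : dotp (b x) (r • gradient f x) = r * fderiv ℝ f x (b x) := by
    rw [dotp_eq_inner, inner_smul_right, ← dotp_eq_inner, dotp_gradient]
  rw [Ham, hgrad, mquad_smul, hdrift]
  gcongr

/-- A small multiple of the Lyapunov function: the drift term is linear in the multiple and beats
the quadratic term. -/
lemma GAS.exists_lipschitz_Ham_le_defect (hX : GAS b X) (hb : LipschitzWith Kb b) (hθ : 0 < θ)
    (hΩb : Bornology.IsBounded Ω) (hαS : ∀ y ∈ Ω, memS θ (α y)) (hs : 0 < s) :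
    ∃ (P : Eu n → ℝ) (μ : ℝ), 0 < μ ∧ LipschitzWith 1 P ∧ (∀ x, 0 ≤ P x) ∧ P 0 = 0 ∧
      ∀ x ∈ Ω, DifferentiableAt ℝ P x → Ham α b x (gradient P x) ≤ μ * defect s x := by
  obtain ⟨L, M, hL, hL_nonneg, hL_zero, hL_drift⟩ :=
    hX.exists_lyapunov hb hΩb.isCompact_closure hs
  obtain ⟨μ₁, hμ₁, hμ₁M⟩ := exists_pos_mul_lt one_pos (M : ℝ)
  obtain ⟨μ₂, hμ₂, hμ₂M⟩ := exists_pos_mul_lt (show 0 < s / 4 by positivity) (θ⁻¹ * M ^ 2)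
  set μ := min μ₁ μ₂
  have hμ : 0 < μ := lt_min hμ₁ hμ₂
  have hμM : μ.toNNReal * M ≤ 1 := by
    rw [← NNReal.coe_le_coe, NNReal.coe_mul, Real.coe_toNNReal _ hμ.le, mul_comm]
    exact (mul_le_mul_of_nonneg_left (min_le_left _ _) M.2).trans hμ₁M.le
  have hμs : θ⁻¹ * M ^ 2 * μ ≤ s / 4 :=
    (mul_le_mul_of_nonneg_left (min_le_right _ _) (by positivity)).trans hμ₂M.le
  refine ⟨fun x => μ * L x, μ, hμ, (lipschitzWith_const_mul hμ.le hL).weaken hμM,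
    fun x => mul_nonneg hμ.le (hL_nonneg x), by simp only [hL_zero, mul_zero], fun x hx hdiff => ?_⟩
  have hLx : DifferentiableAt ℝ L x := by
    simpa [hμ.ne'] using hdiff.const_mul μ⁻¹
  calc Ham α b x (gradient (fun y => μ * L y) x)
      ≤ μ ^ 2 * (θ⁻¹ * M ^ 2) + μ * fderiv ℝ L x (b x) :=
        Ham_gradient_const_mul_le hθ (hαS x hx) hL hLx
    _ = μ * (θ⁻¹ * M ^ 2 * μ - max (‖x‖ - s) 0) := by
        rw [hL_drift x (subset_closure hx) hLx]
        ring
    _ ≤ μ * defect s x := by unfold defect; gcongr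

lemma GAS.exists_lipschitz_strict_subsolution (hX : GAS b X) (hb : LipschitzWith Kb b)
    (hθ : 0 < θ) (hΩ : IsOpen Ω) (hΩb : Bornology.IsBounded Ω) (h0 : (0 : Eu n) ∈ Ω)
    (hα : ContinuousOn α Ω) (hαS : ∀ y ∈ Ω, memS θ (α y)) (hd : 0 < d) (hdm : d ≤ m)
    (hm : ∀ x ∈ frontier Ω, m < Vq α b Ω x) :
    ∃ (U : Eu n → ℝ) (K : NNReal) (s μ : ℝ), LipschitzWith K U ∧ U 0 = 0 ∧ 0 < s ∧ 0 < μ ∧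
      K * (2 * s) ≤ d ∧ (∀ x ∈ closure Ω, m < Vq α b Ω x → m - 2 * d ≤ U x) ∧
      ∀ᵐ z : Eu n, z ∈ Ω → Ham α b z (gradient U z) ≤ μ * defect s z := by
  obtain ⟨U₀, hU₀, hU₀_ge⟩ :=
    exists_isLipSubsolution_ge hθ hΩ hΩb h0 hα hb.continuous.continuousOn hαS hd hm
  have hU₀_sub := hU₀.ae_apply_gradient_nonpos hΩ
    (continuousOn_uncurry_Ham hα hb.continuous.continuousOn)
  obtain ⟨K₀, hK₀⟩ := hU₀.lip
  set s : ℝ := d / (2 * (K₀ + 1)) with hs_def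
  have hs : 0 < s := by positivity
  obtain ⟨P, μ, hμ, hP, hP_nonneg, hP_zero, hP_sub⟩ :=
    hX.exists_lipschitz_Ham_le_defect (α := α) hb hθ hΩb hαS hs
  have hm_pos : 0 < m := hd.trans_le hdm
  have hl : d / m ∈ Icc (0 : ℝ) 1 := ⟨by positivity, (div_le_one hm_pos).2 hdm⟩
  refine ⟨fun x => (1 - d / m) * U₀ x + d / m * P x, K₀ + 1, s, d / m * μ,
    lipschitzWith_convexComb hl (hK₀.weaken le_self_add) (hP.weaken le_add_self), ?_, hs,
    by positivity, ?_, fun x hx hV => ?_, ?_⟩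
  · simp [hU₀.map_zero, hP_zero]
  · rw [hs_def, NNReal.coe_add, NNReal.coe_one]
    exact le_of_eq (by field_simp)
  · calc m - 2 * d ≤ m - 2 * d + d / m * d := le_add_of_nonneg_right (mul_nonneg hl.1 hd.le)
      _ = (1 - d / m) * (m - d) := by field_simp; ring
      _ ≤ (1 - d / m) * U₀ x :=
          mul_le_mul_of_nonneg_left (hU₀_ge x hx hV) (sub_nonneg.2 hl.2)
      _ ≤ (1 - d / m) * U₀ x + d / m * P x :=
          le_add_of_nonneg_right (mul_nonneg hl.1 (hP_nonneg x))
  · filter_upwards [hU₀_sub, hK₀.ae_differentiableAt, hP.ae_differentiableAt] with z hz hU₀z hPz hzΩ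
    rw [mul_assoc]
    exact (Ham_gradient_convexComb_le ((hαS z hzΩ).posSemidef hθ.le) hl hU₀z hPz (hz hzΩ)).trans
      (mul_le_mul_of_nonneg_left (hP_sub z hzΩ hPz) hl.1)

lemma exists_contDiff_Ham_le_defect_add {C : Set (Eu n)} {η : ℝ} (hΩ : IsOpen Ω)
    (hC : IsCompact C) (hCΩ : C ⊆ Ω) (hα : ContinuousOn α Ω) (hb : ContinuousOn b Ω)
    (hαC : ∀ x ∈ C, (α x).PosSemidef) (hf : LipschitzWith K f)
    (hsub : ∀ᵐ z : Eu n, z ∈ Ω → Ham α b z (gradient f z) ≤ μ * defect s z) (hη : 0 < η) :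
    ∃ W : Eu n → ℝ, ContDiff ℝ 2 W ∧ (∀ x, |W x - f x| ≤ η) ∧
      ∀ x ∈ C, Ham α b x (gradient W x) ≤ μ * defect s x + η := by
  have hdefect : ContinuousOn (fun z : Eu n × Eu n => μ * defect s z.1) (Ω ×ˢ univ) :=
    (continuous_const.mul ((continuous_defect s).comp continuous_fst)).continuousOn
  obtain ⟨W, hW, hWf, hW_sub⟩ := exists_contDiff_approx_subsolution
    (H := fun x p => Ham α b x p - μ * defect s x) hΩ hC hCΩ
    ((continuousOn_uncurry_Ham hα hb).sub hdefect)
    (fun x hx => (convexOn_Ham (hαC x hx)).sub (concaveOn_const _ convex_univ)) hf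
    (by simpa only [sub_nonpos] using hsub) hη
  exact ⟨W, hW, hWf, fun x hx => sub_le_iff_le_add'.1 (hW_sub x hx)⟩

/-- A smooth substitute for the quasi-potential below the level `k`: a strict subsolution of
`H_α(x, Du) = 0` except where it is at most `2 * d`. -/
structure IsStrictPotential (α : Eu n → Matrix (Fin n) (Fin n) ℝ) (b : Eu n → Eu n)
    (Ω : Set (Eu n)) (k d c : ℝ) (W : Eu n → ℝ) : Prop where
  contDiff : ContDiff ℝ 2 W
  apply_zero_le : W 0 ≤ d
  mem_of_le : ∀ x ∈ closure Ω, W x ≤ k → x ∈ Ω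
  Ham_le : ∀ x ∈ Ω, W x ≤ k → Ham α b x (gradient W x) ≤ -c ∨
    W x ≤ 2 * d ∧ Ham α b x (gradient W x) ≤ c

lemma GAS.exists_isStrictPotential (hX : GAS b X) (hb : LipschitzWith Kb b)
    (hθ : 0 < θ) (hΩ : IsOpen Ω) (hΩb : Bornology.IsBounded Ω) (h0 : (0 : Eu n) ∈ Ω)
    (hα : ContinuousOn α Ω) (hαS : ∀ y ∈ Ω, memS θ (α y)) (hd : 0 < d) (hdm : d ≤ m)
    (hm : ∀ x ∈ frontier Ω, m < Vq α b Ω x) :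
    ∃ (W : Eu n → ℝ) (c : ℝ), 0 < c ∧ IsStrictPotential α b Ω (m - 4 * d) d c W ∧
      ∀ x ∈ closure Ω, W x ≤ m - 4 * d → Vq α b Ω x ≤ m := by
  obtain ⟨U, K, s, μ, hU, hU_zero, hs, hμ, hKs, hU_ge, hU_sub⟩ :=
    hX.exists_lipschitz_strict_subsolution hb hθ hΩ hΩb h0 hα hαS hd hdm hm
  have hVq : ∀ x ∈ closure Ω, U x ≤ m - 3 * d → Vq α b Ω x ≤ m := fun x hx hUx =>
    le_of_not_gt fun hV => by linarith [hU_ge x hx hV]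
  have hmem : ∀ x ∈ closure Ω, U x ≤ m - 3 * d → x ∈ Ω := fun x hx hUx =>
    by_contra fun hxΩ => (hm x (hΩ.frontier_eq ▸ ⟨hx, hxΩ⟩)).not_ge (hVq x hx hUx)
  have hC : IsCompact (closure Ω ∩ {x | U x ≤ m - 3 * d}) :=
    hΩb.isCompact_closure.inter_right (isClosed_le hU.continuous continuous_const)
  have hCΩ : closure Ω ∩ {x | U x ≤ m - 3 * d} ⊆ Ω := fun x hx => hmem x hx.1 hx.2
  obtain ⟨W, hW, hWU, hW_sub⟩ := exists_contDiff_Ham_le_defect_add hΩ hC hCΩ hα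
    hb.continuous.continuousOn (fun x hx => (hαS x (hCΩ hx)).posSemidef hθ.le) hU hU_sub
    (lt_min hd (show 0 < μ * s / 4 by positivity))
  have hWd : ∀ x, |W x - U x| ≤ d := fun x => (hWU x).trans (min_le_left _ _)
  have hUW : ∀ x, W x ≤ m - 4 * d → U x ≤ m - 3 * d := fun x hx => by
    linarith [(abs_le.1 (hWd x)).1]
  refine ⟨W, μ * s / 2, by positivity, ⟨hW, ?_, fun x hx hWx => hmem x hx (hUW x hWx),
    fun x hx hWx => ?_⟩, fun x hx hWx => hVq x hx (hUW x hWx)⟩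
  · linarith [(abs_le.1 (hWd 0)).2]
  have hHam : Ham α b x (gradient W x) ≤ μ * defect s x + μ * s / 4 := by
    linarith [hW_sub x ⟨subset_closure hx, hUW x hWx⟩, min_le_right d (μ * s / 4)]
  rcases le_or_gt (2 * s) ‖x‖ with hfar | hnear
  · exact .inl (by linarith [mul_le_mul_of_nonneg_left (defect_le_of_le_norm hfar) hμ.le])
  · refine .inr ⟨?_, by linarith [mul_le_mul_of_nonneg_left (defect_le s x) hμ.le]⟩
    have hUx : U x ≤ K * ‖x‖ := by simpa [hU_zero] using hU.le_add_mul x 0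
    linarith [(abs_le.1 (hWd x)).2, mul_le_mul_of_nonneg_left hnear.le K.coe_nonneg]

end StrictPotential

/-! ### Parabolic comparison and the exponential barrier -/

section Comparison

variable {α : Eu n → Matrix (Fin n) (Fin n) ℝ} {b : Eu n → Eu n} {Ω : Set (Eu n)}
  {θ ε κ : ℝ} {v x : Eu n} {f z : Eu n → ℝ}

/-- The value at `x` of the operator `ε tr[A D²z] + v · Dz`, with the coefficients `A` and `v`
frozen at `x`. -/
def ellipticOp (ε : ℝ) (A : Matrix (Fin n) (Fin n) ℝ) (v : Eu n) (z : Eu n → ℝ) (x : Eu n) : ℝ :=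
  ε * trMul A (hessS z x) + dotp v (gradient z x)

lemma SubsolL.tD_le {A : Eu n → ℝ → Matrix (Fin n) (Fin n) ℝ} {u : Eu n → ℝ → ℝ} {T : ℝ≥0∞} {t : ℝ}
    (hu : SubsolL ε A b u Ω T) (hx : x ∈ Ω) (ht : 0 < t) (htT : ENNReal.ofReal t < T) :
    tD u x t ≤ ellipticOp ε (A x t) (b x) (fun y => u y t) x :=
  hu x hx t ht htT

lemma ellipticOp_le_of_isLocalMax_sub {A : Matrix (Fin n) (Fin n) ℝ} (hε : 0 ≤ ε)
    (hA : A.PosSemidef) (hf : ContDiffAt ℝ 2 f x) (hz : ContDiffAt ℝ 2 z x)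
    (hmax : IsLocalMax (fun y => f y - z y) x) :
    ellipticOp ε A v f x ≤ ellipticOp ε A v z x := by
  have hgrad : fderiv ℝ f x = fderiv ℝ z x := by
    have hcrit := hmax.fderiv_eq_zero
    rwa [fderiv_fun_sub (hf.differentiableAt two_ne_zero) (hz.differentiableAt two_ne_zero),
      sub_eq_zero] at hcrit
  have hhess : mle (hessS f x) (hessS z x) := fun p => by
    rw [mquad_hessS hf, mquad_hessS hz]
    exact fderiv_fderiv_le_of_isLocalMax_sub hf hz hmax p
  unfold ellipticOp
  rw [dotp_gradient, dotp_gradient, hgrad]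
  gcongr
  exact trMul_le_trMul hA hhess

lemma le_add_mul_of_ellipticOp_lt {K : Set (Eu n)} {A : Eu n → ℝ → Matrix (Fin n) (Fin n) ℝ}
    {u : Eu n → ℝ → ℝ} {t : ℝ} (hε : 0 ≤ ε) (hK : IsCompact K) (hz : ContDiff ℝ 2 z)
    (hcont : ContinuousOn (fun p : Eu n × ℝ => u p.1 p.2) (K ×ˢ Icc 0 t))
    (hreg : ∀ x ∈ interior K, ∀ s ∈ Ioc 0 t,
      ContDiffAt ℝ 2 (fun y => u y s) x ∧ DifferentiableAt ℝ (u x) s)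
    (hA : ∀ x ∈ interior K, ∀ s ∈ Ioc 0 t, (A x s).PosSemidef)
    (hsub : ∀ x ∈ interior K, ∀ s ∈ Ioc 0 t,
      tD u x s ≤ ellipticOp ε (A x s) (b x) (fun y => u y s) x)
    (hstrict : ∀ x ∈ interior K, ∀ s ∈ Ioc 0 t, ellipticOp ε (A x s) (b x) z x < κ)
    (hinit : ∀ x ∈ K, u x 0 ≤ z x)
    (hbdry : ∀ x ∈ frontier K, ∀ s ∈ Ioc 0 t, u x s ≤ z x + κ * s) (hx : x ∈ K) (ht : 0 ≤ t) :
    u x t ≤ z x + κ * t := by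
  have hcont' : ContinuousOn (fun p : Eu n × ℝ => u p.1 p.2 - z p.1 - κ * p.2) (K ×ˢ Icc 0 t) :=
    (hcont.sub (hz.continuous.comp continuous_fst).continuousOn).sub
      (continuous_const.mul continuous_snd).continuousOn
  obtain ⟨⟨y, s⟩, ⟨hy, hs⟩, hmax⟩ := (hK.prod isCompact_Icc).exists_isMaxOn
    ⟨(x, t), hx, right_mem_Icc.2 ht⟩ hcont'
  have hmax_le : ∀ w ∈ K, ∀ r ∈ Icc 0 t, u w r - z w - κ * r ≤ u y s - z y - κ * s :=
    fun w hw r hr => hmax (show (w, r) ∈ K ×ˢ Icc 0 t from ⟨hw, hr⟩)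
  suffices u y s ≤ z y + κ * s by linarith [hmax_le x hx t (right_mem_Icc.2 ht)]
  rcases hs.1.eq_or_lt with rfl | hs_pos
  · simpa using hinit y hy
  have hs' : s ∈ Ioc 0 t := ⟨hs_pos, hs.2⟩
  by_cases hyint : y ∈ interior K
  swap
  · exact hbdry y ⟨subset_closure hy, hyint⟩ s hs'
  obtain ⟨hspace, htime⟩ := hreg y hyint s hs'
  have hκ_le : κ ≤ tD u y s := le_deriv_of_forall_Icc_sub_le hs_pos htime fun r hr => by
    linarith [hmax_le y hy r ⟨hr.1, hr.2.trans hs.2⟩]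
  have hloc : IsLocalMax (fun w => u w s - z w) y := by
    filter_upwards [mem_interior_iff_mem_nhds.1 hyint] with w hw
    linarith [hmax_le w hw s hs]
  have hop := ellipticOp_le_of_isLocalMax_sub (v := b y) hε (hA y hyint s hs') hspace
    hz.contDiffAt hloc
  linarith [hsub y hyint s hs', hstrict y hyint s hs']

/-- The barrier `C exp((W - k) / ε)`. Its second derivatives produce the term `ε⁻¹ A DW · DW`,
which turns the operator with diffusion `ε A` into the Hamiltonian of `W`. -/
def expBarrier (C k ε : ℝ) (W : Eu n → ℝ) (x : Eu n) : ℝ := C * Real.exp ((W x - k) / ε)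

variable {C k c : ℝ} {W : Eu n → ℝ}

lemma contDiff_expBarrier (hW : ContDiff ℝ 2 W) (C k ε : ℝ) :
    ContDiff ℝ 2 (expBarrier C k ε W) :=
  contDiff_const.mul (((hW.sub contDiff_const).div_const ε).exp)

lemma expBarrier_nonneg (hC : 0 ≤ C) (x : Eu n) : 0 ≤ expBarrier C k ε W x :=
  mul_nonneg hC (Real.exp_pos _).le

lemma fderiv_expBarrier (hW : DifferentiableAt ℝ W x) (C k ε : ℝ) :
    fderiv ℝ (expBarrier C k ε W) x = (expBarrier C k ε W x / ε) • fderiv ℝ W x :=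
  (hasFDerivAt_const_mul_exp hW.hasFDerivAt C k ε).fderiv

lemma hessS_expBarrier_mle (hε : 0 < ε) (hC : 0 ≤ C) (hW : ContDiff ℝ 2 W)
    (hc : ‖fderiv ℝ (fderiv ℝ W) x‖ ≤ c) :
    mle (hessS (expBarrier C k ε W) x)
      ((expBarrier C k ε W x / ε * c) • 1 + (expBarrier C k ε W x / ε / ε) •
        Matrix.vecMulVec (gradient W x).ofLp (gradient W x).ofLp) := fun p => by
  have hq : 0 ≤ expBarrier C k ε W x / ε := div_nonneg (expBarrier_nonneg hC x) hε.le
  have hhess : fderiv ℝ (fderiv ℝ W) x p p ≤ c * ‖p‖ ^ 2 :=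
    calc fderiv ℝ (fderiv ℝ W) x p p ≤ ‖fderiv ℝ (fderiv ℝ W) x‖ * ‖p‖ * ‖p‖ :=
          (le_abs_self _).trans ((fderiv ℝ (fderiv ℝ W) x).le_opNorm₂ p p)
      _ ≤ c * ‖p‖ ^ 2 := by rw [mul_assoc, ← sq]; gcongr
  rw [mquad_hessS (contDiff_expBarrier hW C k ε).contDiffAt, mquad_smul_one_add_vecMulVec]
  calc fderiv ℝ (fderiv ℝ (expBarrier C k ε W)) x p p
      = expBarrier C k ε W x / ε *
          (fderiv ℝ (fderiv ℝ W) x p p + ε⁻¹ * fderiv ℝ W x p ^ 2) :=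
        fderiv_fderiv_const_mul_exp hW C k ε x p
    _ ≤ expBarrier C k ε W x / ε * (c * ‖p‖ ^ 2 + ε⁻¹ * fderiv ℝ W x p ^ 2) := by gcongr
    _ = _ := by rw [← dotp_gradient]; ring

lemma ellipticOp_expBarrier_le {A : Matrix (Fin n) (Fin n) ℝ} (hε : 0 < ε) (hC : 0 ≤ C)
    (hW : ContDiff ℝ 2 W) (hA : A.PosSemidef) (hAα : mle A (α x))
    (hα : ∀ p, mquad (α x) p ≤ θ * ‖p‖ ^ 2) (hc : ‖fderiv ℝ (fderiv ℝ W) x‖ ≤ c) :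
    ellipticOp ε A (b x) (expBarrier C k ε W) x ≤
      expBarrier C k ε W x / ε * (ε * (c * (n * θ)) + Ham α b x (gradient W x)) := by
  have hhess := hessS_expBarrier_mle (k := k) hε hC hW hc
  have hdrift : dotp (b x) (gradient (expBarrier C k ε W) x) =
      expBarrier C k ε W x / ε * dotp (b x) (gradient W x) := by
    rw [dotp_gradient, dotp_gradient, fderiv_expBarrier (hW.differentiable two_ne_zero x)]
    rfl
  set q := expBarrier C k ε W x / ε
  have hq : 0 ≤ q := div_nonneg (expBarrier_nonneg hC x) hε.le
  have hc_nonneg : 0 ≤ c := le_trans (norm_nonneg (fderiv ℝ (fderiv ℝ W) x)) hc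
  have htrace : A.trace ≤ n * θ := trace_le_of_mquad_le fun p => (hAα p).trans (hα p)
  calc ellipticOp ε A (b x) (expBarrier C k ε W) x
      ≤ ε * (q * c * A.trace + q / ε * mquad A (gradient W x)) + q * dotp (b x) (gradient W x) := by
        rw [ellipticOp, hdrift, ← trMul_smul_one_add_vecMulVec]
        gcongr
        exact trMul_le_trMul hA hhess
    _ ≤ ε * (q * c * (n * θ) + q / ε * mquad (α x) (gradient W x)) +
          q * dotp (b x) (gradient W x) := by
        gcongr
        exact hAα _
    _ = q * (ε * (c * (n * θ)) + Ham α b x (gradient W x)) := by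
        unfold Ham
        field_simp
        ring

end Comparison

/-! ### The bound up to exponentially long times -/

section Barrier

variable {α : Eu n → Matrix (Fin n) (Fin n) ℝ} {b : Eu n → Eu n} {Ω : Set (Eu n)}
  {θ ε κ C N k c d m δ t : ℝ} {x : Eu n} {W : Eu n → ℝ}
  {A : Eu n → ℝ → Matrix (Fin n) (Fin n) ℝ} {u : Eu n → ℝ → ℝ} {T : ℝ≥0∞}

lemma exists_ellipticOp_expBarrier_le (hθ : 0 < θ) (hΩb : Bornology.IsBounded Ω)
    (hαS : ∀ x ∈ Ω, memS θ (α x)) (hW : ContDiff ℝ 2 W) :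
    ∃ N, 0 ≤ N ∧ ∀ ε > 0, ∀ C ≥ 0, ∀ k, ∀ x ∈ Ω, ∀ M : Matrix (Fin n) (Fin n) ℝ,
      M.PosSemidef → mle M (α x) →
      ellipticOp ε M (b x) (expBarrier C k ε W) x ≤
        expBarrier C k ε W x / ε * (ε * N + Ham α b x (gradient W x)) := by
  obtain ⟨B, hB⟩ := hΩb.isCompact_closure.exists_bound_of_continuousOn
    ((hW.fderiv_right (m := 1) (by norm_num)).continuous_fderiv one_ne_zero).continuousOn
  refine ⟨max B 0 * (n * θ⁻¹), by positivity, fun ε hε C hC k x hx M hM hMα => ?_⟩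
  exact ellipticOp_expBarrier_le hε hC hW hM hMα (fun p => ((hαS x hx).2 p).2)
    ((hB x (subset_closure hx)).trans (le_max_left B 0))

lemma IsStrictPotential.expBarrier_div_mul_lt (hW : IsStrictPotential α b Ω k d c W) (hc : 0 < c)
    (hC : 0 < C) (hN : 0 ≤ N) (hε : ε ∈ Ioo 0 1) (hεN : ε * N ≤ c) (hx : x ∈ Ω) (hxk : W x ≤ k) :
    expBarrier C k ε W x / ε * (ε * N + Ham α b x (gradient W x)) <
      C * Real.exp ((2 * d - k) / ε) / ε * (N + c + 1) := by
  obtain ⟨hε_pos, hε_lt⟩ := hε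
  have hq : 0 ≤ expBarrier C k ε W x / ε := div_nonneg (expBarrier_nonneg hC.le x) hε_pos.le
  rcases hW.Ham_le x hx hxk with hneg | ⟨hWx, hHam⟩
  · calc expBarrier C k ε W x / ε * (ε * N + Ham α b x (gradient W x)) ≤ 0 :=
          mul_nonpos_of_nonneg_of_nonpos hq (by linarith)
      _ < _ := by positivity
  · have hεN' : ε * N ≤ N := mul_le_of_le_one_left hN hε_lt.le
    calc expBarrier C k ε W x / ε * (ε * N + Ham α b x (gradient W x))
        ≤ expBarrier C k ε W x / ε * (N + c) := by gcongr
      _ ≤ C * Real.exp ((2 * d - k) / ε) / ε * (N + c) := by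
          unfold expBarrier
          gcongr
      _ < C * Real.exp ((2 * d - k) / ε) / ε * (N + c + 1) :=
          mul_lt_mul_of_pos_left (lt_add_one _) (by positivity)

lemma eq_of_mem_frontier_closure_inter_le (hΩ : IsOpen Ω) (hW : Continuous W)
    (hmem : ∀ x ∈ closure Ω, W x ≤ k → x ∈ Ω) (hx : x ∈ frontier (closure Ω ∩ {y | W y ≤ k})) :
    W x = k := by
  have hclosed : IsClosed (closure Ω ∩ {y | W y ≤ k}) :=
    isClosed_closure.inter (isClosed_le hW continuous_const)
  obtain ⟨hxΩ, hxk⟩ := hclosed.frontier_subset hx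
  refine hxk.eq_of_not_lt fun hlt => hx.2 (mem_interior.2 ⟨Ω ∩ {y | W y < k}, ?_, ?_, ?_⟩)
  · exact inter_subset_inter subset_closure fun y (hy : W y < k) => hy.le
  · exact hΩ.inter (isOpen_lt hW continuous_const)
  · exact ⟨hmem x hxΩ hxk, hlt⟩

lemma SubsolL.le_expBarrier_add_mul (hsub : SubsolL ε A b u Ω T) (hΩ : IsOpen Ω)
    (hΩb : Bornology.IsBounded Ω) (hε : 0 ≤ ε) (hC : 0 ≤ C) (hκ : 0 ≤ κ) (hW : ContDiff ℝ 2 W)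
    (hmem : ∀ x ∈ closure Ω, W x ≤ k → x ∈ Ω)
    (hcont : ContinuousOn (fun p : Eu n × ℝ => u p.1 p.2) (cylC Ω T))
    (hreg : ∀ x ∈ Ω, ∀ t, 0 < t → ENNReal.ofReal t < T →
      ContDiffAt ℝ 2 (fun y => u y t) x ∧ DifferentiableAt ℝ (u x) t)
    (hA : ∀ x ∈ Ω, ∀ t, 0 < t → ENNReal.ofReal t < T → (A x t).PosSemidef)
    (hstrict : ∀ x ∈ Ω, W x ≤ k → ∀ t, 0 < t → ENNReal.ofReal t < T →
      ellipticOp ε (A x t) (b x) (expBarrier C k ε W) x < κ)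
    (hinit : ∀ x ∈ closure Ω, W x ≤ k → u x 0 ≤ 0)
    (hbdd : ∀ x ∈ Ω, ∀ t, 0 < t → ENNReal.ofReal t < T → u x t ≤ C)
    (hx : x ∈ Ω) (hxk : W x ≤ k) (ht : 0 ≤ t) (htT : ENNReal.ofReal t < T) :
    u x t ≤ expBarrier C k ε W x + κ * t := by
  set K := closure Ω ∩ {x | W x ≤ k}
  have hK : IsCompact K :=
    hΩb.isCompact_closure.inter_right (isClosed_le hW.continuous continuous_const)
  have hKΩ : ∀ y ∈ K, y ∈ Ω := fun y hy => hmem y hy.1 hy.2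
  have hintK : ∀ y ∈ interior K, y ∈ K := fun y hy => interior_subset hy
  have hltT : ∀ s ∈ Icc 0 t, ENNReal.ofReal s < T := fun s hs =>
    (ENNReal.ofReal_le_ofReal hs.2).trans_lt htT
  refine le_add_mul_of_ellipticOp_lt (A := A) (b := b) hε hK (contDiff_expBarrier hW C k ε)
    (hcont.mono fun p hp => ⟨hp.1.1, hp.2.1, (hltT p.2 hp.2).le⟩)
    (fun y hy s hs => hreg y (hKΩ y (hintK y hy)) s hs.1 (hltT s ⟨hs.1.le, hs.2⟩))
    (fun y hy s hs => hA y (hKΩ y (hintK y hy)) s hs.1 (hltT s ⟨hs.1.le, hs.2⟩))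
    (fun y hy s hs => hsub.tD_le (hKΩ y (hintK y hy)) hs.1 (hltT s ⟨hs.1.le, hs.2⟩))
    (fun y hy s hs => hstrict y (hKΩ y (hintK y hy)) (hintK y hy).2 s hs.1
      (hltT s ⟨hs.1.le, hs.2⟩))
    (fun y hy => (hinit y hy.1 hy.2).trans (expBarrier_nonneg hC y))
    (fun y hy s hs => ?_) ⟨subset_closure hx, hxk⟩ ht
  have hu := hbdd y (hKΩ y (hK.isClosed.frontier_subset hy)) s hs.1 (hltT s ⟨hs.1.le, hs.2⟩)
  have hbarrier : expBarrier C k ε W y = C := by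
    rw [expBarrier, eq_of_mem_frontier_closure_inter_le hΩ hW.continuous hmem hy, sub_self,
      zero_div, Real.exp_zero, mul_one]
  linarith [mul_nonneg hκ hs.1.le]

lemma tendsto_div_mul_exp_neg_div_nhdsGT_zero (Q : ℝ) (hd : 0 < d) :
    Tendsto (fun ε : ℝ => Q / ε * Real.exp (-d / ε)) (𝓝[>] 0) (𝓝 0) := by
  have hlim := ((tendsto_rpow_mul_exp_neg_mul_atTop_nhds_zero 1 d hd).comp
    tendsto_inv_nhdsGT_zero).const_mul Q
  rw [mul_zero] at hlim
  refine hlim.congr fun ε => ?_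
  simp only [Function.comp_apply, Real.rpow_one, div_eq_mul_inv, mul_assoc]

lemma exists_forall_mul_le_and_div_mul_exp_lt (N Q : ℝ) (hc : 0 < c) (hd : 0 < d) (hδ : 0 < δ) :
    ∃ ε₀ ∈ Ioo (0 : ℝ) 1, ∀ ε ∈ Ioo 0 ε₀, ε * N ≤ c ∧ Q / ε * Real.exp (-d / ε) < δ := by
  have hmul : Tendsto (fun ε : ℝ => ε * N) (𝓝[>] 0) (𝓝 0) := by
    simpa using (tendsto_nhdsWithin_of_tendsto_nhds tendsto_id).mul_const (a := (0 : ℝ)) N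
  obtain ⟨ε₁, hε₁, hsmall⟩ := mem_nhdsGT_iff_exists_Ioo_subset.1
    ((hmul.eventually_le_const hc).and
      ((tendsto_div_mul_exp_neg_div_nhdsGT_zero Q hd).eventually_lt_const hδ))
  exact ⟨min ε₁ (1 / 2), ⟨lt_min hε₁ one_half_pos, (min_le_right _ _).trans_lt one_half_lt_one⟩,
    fun ε hε => hsmall ⟨hε.1, hε.2.trans_le (min_le_left _ _)⟩⟩

lemma expBarrier_add_mul_le (hε : ε ∈ Ioo 0 1) (hC : 0 ≤ C) {Q : ℝ} (hQ : 0 ≤ Q)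
    (hWx : W x ≤ d) (hdm : 6 * d ≤ m) (hdδ : 7 * d ≤ δ) (ht : t ≤ Real.exp ((m - δ) / ε)) :
    expBarrier C (m - 4 * d) ε W x +
        C * Real.exp ((2 * d - (m - 4 * d)) / ε) / ε * Q * t ≤
      C * (Q + 1) / ε * Real.exp (-d / ε) := by
  obtain ⟨hε_pos, hε_lt⟩ := hε
  have hbarrier : expBarrier C (m - 4 * d) ε W x ≤ C / ε * Real.exp (-d / ε) :=
    mul_le_mul (le_div_self hC hε_pos hε_lt.le)
      (Real.exp_le_exp.2 (by gcongr; linarith)) (Real.exp_pos _).le (by positivity)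
  have hexp : Real.exp ((2 * d - (m - 4 * d)) / ε) * t ≤ Real.exp (-d / ε) :=
    calc Real.exp ((2 * d - (m - 4 * d)) / ε) * t
        ≤ Real.exp ((2 * d - (m - 4 * d)) / ε) * Real.exp ((m - δ) / ε) := by gcongr
      _ = Real.exp ((6 * d - δ) / ε) := by rw [← Real.exp_add]; congr 1; ring
      _ ≤ Real.exp (-d / ε) := by gcongr; linarith
  calc expBarrier C (m - 4 * d) ε W x + C * Real.exp ((2 * d - (m - 4 * d)) / ε) / ε * Q * t
      = expBarrier C (m - 4 * d) ε W x +
          C * Q / ε * (Real.exp ((2 * d - (m - 4 * d)) / ε) * t) := by ring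
    _ ≤ C / ε * Real.exp (-d / ε) + C * Q / ε * Real.exp (-d / ε) := by gcongr
    _ = C * (Q + 1) / ε * Real.exp (-d / ε) := by ring

end Barrier

theorem stmt12_general {θ C₀ m δ : ℝ} {Ω : Set (Eu n)} {α : Eu n → Matrix (Fin n) (Fin n) ℝ}
    {b : Eu n → Eu n} {X : ℝ → Eu n → Eu n} {Kb : NNReal} {T : ℝ → ℝ≥0∞}
    {A : ℝ → Eu n → ℝ → Matrix (Fin n) (Fin n) ℝ} {u : ℝ → Eu n → ℝ → ℝ}
    (hθ : 0 < θ) (hΩ : IsOpen Ω) (hΩb : Bornology.IsBounded Ω) (h0 : (0 : Eu n) ∈ Ω)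
    (hα : ContinuousOn α Ω) (hαS : ∀ x ∈ Ω, memS θ (α x)) (hb : LipschitzWith Kb b)
    (hX : GAS b X) (hC₀ : 0 < C₀) (hm : 0 < m) (hmM : m < Mq α b Ω)
    (hA : ∀ ε ∈ Ioo (0 : ℝ) 1, ∀ x ∈ Ω, ∀ t, 0 < t → ENNReal.ofReal t < T ε →
      (A ε x t).PosSemidef ∧ mle (A ε x t) (α x))
    (hu : ∀ ε ∈ Ioo (0 : ℝ) 1,
      ContinuousOn (fun p : Eu n × ℝ => u ε p.1 p.2) (cylC Ω (T ε)) ∧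
      (∀ x ∈ Ω, ∀ t, 0 < t → ENNReal.ofReal t < T ε →
        ContDiffAt ℝ 2 (fun y => u ε y t) x ∧ DifferentiableAt ℝ (u ε x) t) ∧
      SubsolL ε (A ε) b (u ε) Ω (T ε) ∧
      (∀ x ∈ SigmaM α b Ω m, u ε x 0 ≤ 0) ∧
      ∀ x ∈ Ω, ∀ t, 0 < t → ENNReal.ofReal t < T ε → u ε x t ≤ C₀)
    (hδ : 0 < δ) :
    ∃ ε₀ ∈ Ioo (0 : ℝ) 1, ∀ ε ∈ Ioo 0 ε₀, ∀ t, 0 ≤ t → t < Real.exp ((m - δ) / ε) →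
      ENNReal.ofReal t < T ε → u ε 0 t ≤ δ := by
  obtain ⟨d, hd, hdδ, hdm⟩ : ∃ d > 0, 7 * d ≤ δ ∧ 7 * d ≤ m :=
    ⟨min δ m / 7, by have := lt_min hδ hm; positivity, by linarith [min_le_left δ m],
      by linarith [min_le_right δ m]⟩
  obtain ⟨W, c, hc, hW, hWV⟩ := hX.exists_isStrictPotential hb hθ hΩ hΩb h0 hα hαS hd
    (by linarith) fun x hx => lt_Vq_of_lt_Mq hΩ hmM hx
  obtain ⟨N, hN, hop⟩ := exists_ellipticOp_expBarrier_le (b := b) hθ hΩb hαS hW.contDiff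
  obtain ⟨ε₀, hε₀, hsmall⟩ :=
    exists_forall_mul_le_and_div_mul_exp_lt N (C₀ * (N + c + 1 + 1)) hc hd hδ
  refine ⟨ε₀, hε₀, fun ε hε t ht htexp htT => ?_⟩
  obtain ⟨hεN, hlast⟩ := hsmall ε hε
  have hε01 : ε ∈ Ioo 0 1 := ⟨hε.1, hε.2.trans hε₀.2⟩
  obtain ⟨hcont, hreg, hsub, hinit, hbdd⟩ := hu ε hε01
  have hbound := hsub.le_expBarrier_add_mul hΩ hΩb hε.1.le hC₀.le
    (mul_nonneg (div_nonneg (by positivity) hε.1.le) (by positivity)) hW.contDiff hW.mem_of_le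
    hcont hreg (fun x hx s hs hsT => (hA ε hε01 x hx s hs hsT).1)
    (fun x hx hxk s hs hsT => (hop ε hε.1 C₀ hC₀.le _ x hx _ (hA ε hε01 x hx s hs hsT).1
      (hA ε hε01 x hx s hs hsT).2).trans_lt
        (hW.expBarrier_div_mul_lt hc hC₀ hN hε01 hεN hx hxk))
    (fun x hx hxk => hinit x ⟨hx, hWV x hx hxk⟩) hbdd h0
    (hW.apply_zero_le.trans (by linarith)) ht htT
  linarith [expBarrier_add_mul_le hε01 hC₀.le (show 0 ≤ N + c + 1 by positivity)
    hW.apply_zero_le (show 6 * d ≤ m by linarith) hdδ htexp.le]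

/-- Proposition 4.1: the upper barrier bound valid up to times `exp((m−δ)/ε)`,
`m < M_α`. -/
theorem stmt12 {n : ℕ} (S : SettingB n) (α : Eu n → Matrix (Fin n) (Fin n) ℝ)
    (hαc : ContinuousOn α (closure S.Ω)) (hαm : ∀ x ∈ closure S.Ω, memS S.θ₀ (α x))
    (T : ℝ → ℝ≥0∞) (hT : ∀ ε, 0 < T ε)
    (C₀ m : ℝ) (hC₀ : 0 < C₀) (hm : 0 < m) (hmM : m < Mq α S.b S.Ω)
    (A : ℝ → Eu n → ℝ → Matrix (Fin n) (Fin n) ℝ) (u : ℝ → Eu n → ℝ → ℝ)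
    (hA : ∀ ε ∈ Set.Ioo (0:ℝ) 1, MatC S.θ₀ (A ε) S.Ω (T ε) ∧
      ∀ x ∈ S.Ω, ∀ t : ℝ, 0 < t → ENNReal.ofReal t < T ε → mle (A ε x t) (α x))
    (hu : ∀ ε ∈ Set.Ioo (0:ℝ) 1, Classical21 (u ε) S.Ω (T ε) ∧
      SubsolL ε (A ε) S.b (u ε) S.Ω (T ε) ∧
      (∀ x ∈ SigmaM α S.b S.Ω m, u ε x 0 ≤ 0) ∧
      (∀ x ∈ S.Ω, ∀ t : ℝ, 0 < t → ENNReal.ofReal t < T ε → u ε x t ≤ C₀))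
    (δ : ℝ) (hδ : 0 < δ) :
    ∃ ε₀ ∈ Set.Ioo (0:ℝ) 1, ∀ ε ∈ Set.Ioo (0:ℝ) ε₀,
      ∀ t : ℝ, 0 ≤ t → t < Real.exp ((m - δ) / ε) → ENNReal.ofReal t < T ε →
        u ε 0 t ≤ δ := by
  obtain ⟨hΩ, hΩb, -⟩ := S.domain
  obtain ⟨Kb, hb⟩ := S.b_lip
  obtain ⟨X, hX⟩ := S.b_gas
  refine stmt12_general (A := A) S.θ₀_mem.1 hΩ hΩb S.zero_mem (hαc.mono subset_closure)
    (fun x hx => hαm x (subset_closure hx)) hb hX hC₀ hm hmM ?_ ?_ hδ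
  · exact fun ε hε x hx t ht htT => ⟨((hA ε hε).1.2 (x, t)
      ⟨subset_closure hx, ht.le, htT.le⟩).posSemidef S.θ₀_mem.1.le, (hA ε hε).2 x hx t ht htT⟩
  · intro ε hε
    obtain ⟨⟨hcont, hreg, -⟩, hsub, hinit, hbdd⟩ := hu ε hε
    exact ⟨hcont, hreg, hsub, hinit, hbdd⟩
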